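/- arXiv:2201.00476 — 2 statements merged into one kernel-verified Lean document; each statement's English description precedes it below -/
import Mathlib

section
/- Let m, n be positive integers with n ≥ 2. There exists a set Z = mP_1 + ... + mP_{n+4} of n+4 non-degenerate equimultiple fat points in P^n such that reg(Z) = 3m - 1 < T(Z) = 3m, where T(Z) is the Segre bound max{T_j(Z) : j=1,...,n}, T_j(Z) = max{⌊(mq+j-2)/j⌋ : some q of the points lie on a j-dimensional linear subspace}. -/
open MvPolynomial

noncomputable section

/-- The defining prime ideal of the point of projective space with homogeneous
coordinates `p`: the ideal generated by the linear forms vanishing at `p`. -/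
def pointIdeal {K : Type} [Field K] {N : ℕ} (p : Fin N → K) :
    Ideal (MvPolynomial (Fin N) K) :=
  Ideal.span {f | f.IsHomogeneous 1 ∧ eval p f = 0}

/-- The ideal of the fat point scheme `m₁P₁ + ⋯ + m_sP_s`. -/
def fatIdeal {K : Type} [Field K] {N s : ℕ} (p : Fin s → Fin N → K) (m : Fin s → ℕ) :
    Ideal (MvPolynomial (Fin N) K) :=
  ⨅ i, pointIdeal (p i) ^ (m i)

/-- `dim_K` of the degree-`t` graded piece of the ideal `I`. -/
def gradedDim (K : Type) [Field K] {N : ℕ} (I : Ideal (MvPolynomial (Fin N) K)) (t : ℕ) : ℕ :=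
  Module.finrank K ↥(homogeneousSubmodule (Fin N) K t ⊓ I.restrictScalars K)

/-- The Hilbert function of `R/I` in degree `t`. -/
def hilbFn (K : Type) [Field K] {N : ℕ} (I : Ideal (MvPolynomial (Fin N) K)) (t : ℕ) : ℕ :=
  Module.finrank K ↥(homogeneousSubmodule (Fin N) K t) - gradedDim K I t

/-- The regularity index of `R/I` relative to the multiplicity `e`:
the least `t` with `H_{R/I}(t) = e`. -/
def regIndex (K : Type) [Field K] {N : ℕ} (I : Ideal (MvPolynomial (Fin N) K)) (e : ℕ) : ℕ :=
  sInf {t | hilbFn K I t = e}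

/-- The multiplicity `e(R/I) = ∑ C(mᵢ+n-1, n)` of a fat point scheme in `ℙⁿ`. -/
def fatMult (n : ℕ) {s : ℕ} (m : Fin s → ℕ) : ℕ :=
  ∑ i, (m i + n - 1).choose n

/-- The regularity index of the fat point scheme `m₁P₁ + ⋯ + m_sP_s` in `ℙⁿ`. -/
def regFat (K : Type) [Field K] {n s : ℕ} (p : Fin s → Fin (n + 1) → K) (m : Fin s → ℕ) : ℕ :=
  regIndex K (fatIdeal p m) (fatMult n m)

/-- The coordinate vectors `p i` represent distinct points of projective space. -/
def ProjDistinct {K : Type} [Field K] {N s : ℕ} (p : Fin s → Fin N → K) : Prop :=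
  (∀ i, p i ≠ 0) ∧ ∀ i j, i ≠ j → ∀ c : K, p i ≠ c • p j

/-- The points `p i`, `i ∈ Q`, lie on a `j`-dimensional linear subspace of `ℙⁿ`. -/
def OnLinearSubspace {K : Type} [Field K] {N s : ℕ} (p : Fin s → Fin N → K)
    (Q : Finset (Fin s)) (j : ℕ) : Prop :=
  ∃ W : Submodule K (Fin N → K), Module.finrank K ↥W ≤ j + 1 ∧ ∀ i ∈ Q, p i ∈ W

open Classical in
/-- The Segre bound `T(Z) = max {T_j(Z) | j = 1,…,n}` for fat points in `ℙⁿ`. -/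
def segreBound {K : Type} [Field K] (n : ℕ) {s : ℕ} (p : Fin s → Fin (n + 1) → K)
    (m : Fin s → ℕ) : ℕ :=
  (Finset.Icc 1 n).sup fun j =>
    Finset.univ.powerset.sup fun Q =>
      if Q.Nonempty ∧ OnLinearSubspace p Q j then (∑ i ∈ Q, m i + j - 2) / j else 0

/-- The standard coordinate point `(1,0,…,0)`. -/
def stdPt (K : Type) [Field K] (N : ℕ) : Fin N → K := fun j => if (j : ℕ) = 0 then 1 else 0

/-!
Take the coordinate points `e_0, …, e_n` and the points `e_1 - e_2`, `e_2 - e_0`, `e_0 - e_1`, one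
on each side of a coordinate triangle. The Hilbert function of `Z` attains its multiplicity in
degree `t` exactly when every form of degree `t` agrees modulo `℘_i ^ m` with one lying in `℘_j ^ m`
for all `j ≠ i`. Each `P_i` is separated from the other points by a pair of hyperplanes, that is, by
a quadric `F_i`. Multiplication by `F_i ^ m` identifies the forms of degree `m - 1` with the forms
of degree `3m - 1` modulo `℘_i ^ m`, so multiples of `F_i ^ m` do the job in degree `3m - 1`.

Conversely, restrict an interpolating form of degree `t` to a line through some of the points and
count zeros: if the line contains `q` of the points, then `qm ≤ t + 1`. Three of the points are
collinear, so the regularity index is `3m - 1`; and no line contains more than three, so `T_1 ≤ 3m`.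
For `j ≥ 2`, a `j`-dimensional subspace contains at most `j + 4` of the points, because all but
three of them are linearly independent, whence `T_j ≤ 3m`. The six points in the plane of the
triangle give `T_2 = 3m`.
-/

section LineRestriction

variable {σ R A : Type*} [CommSemiring R] [CommSemiring A] [Algebra R A]

theorem aeval_smul_of_isHomogeneous {f : MvPolynomial σ R} {t : ℕ} (hf : f.IsHomogeneous t)
    (r : A) (x : σ → A) : aeval (r • x) f = r ^ t * aeval x f := by
  rw [aeval_def, aeval_def, eval₂_eq, eval₂_eq, Finset.mul_sum]
  refine Finset.sum_congr rfl fun s hs => ?_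
  have hdeg : ∑ i ∈ s.support, s i = t := by
    rw [← Finsupp.degree_apply, Finsupp.degree_eq_weight_one]
    exact hf (mem_support_iff.1 hs)
  simp only [Pi.smul_apply, smul_eq_mul, mul_pow, Finset.prod_mul_distrib,
    Finset.prod_pow_eq_pow_sum, hdeg]
  ring

theorem eval_smul_of_isHomogeneous {f : MvPolynomial σ R} {t : ℕ} (hf : f.IsHomogeneous t)
    (r : R) (x : σ → R) : eval (r • x) f = r ^ t * eval x f := by
  simpa only [aeval_eq_eval] using aeval_smul_of_isHomogeneous hf r x

/-- The restriction `f ↦ f(b + T v)` of a polynomial to the line through `b` with direction `v`.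
Coefficients are extended to `A` so that `b` and `v` may also be generic. -/
def lineRestrict (b v : σ → A) : MvPolynomial σ R →ₐ[R] Polynomial A :=
  aeval fun i => Polynomial.C (b i) + Polynomial.C (v i) * Polynomial.X

theorem eval_lineRestrict (b v : σ → A) (c : A) (f : MvPolynomial σ R) :
    Polynomial.eval c (lineRestrict b v f) = aeval (b + c • v) f := by
  have h : ((Polynomial.aeval c).restrictScalars R).comp (lineRestrict b v) =
      aeval (R := R) (b + c • v) := by
    ext i
    simp [lineRestrict, mul_comm c]
  exact DFunLike.congr_fun h f

theorem natDegree_lineRestrict_le (b v : σ → A) {f : MvPolynomial σ R} {t : ℕ}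
    (hf : f.IsHomogeneous t) : (lineRestrict b v f).natDegree ≤ t := by
  have h := aeval_natDegree_le (n := 1) (map (algebraMap R A) f)
    (hf.map (algebraMap R A)).totalDegree_le
    (fun i => Polynomial.C (b i) + Polynomial.C (v i) * Polynomial.X)
    (fun i => by compute_degree)
  rwa [aeval_map_algebraMap, mul_one] at h

theorem lineRestrict_of_isHomogeneous_one (b v : σ → A) {l : MvPolynomial σ R}
    (hl : l.IsHomogeneous 1) :
    lineRestrict b v l = Polynomial.C (aeval b l) + Polynomial.C (aeval v l) * Polynomial.X := by
  rw [← mem_homogeneousSubmodule, homogeneousSubmodule_one_eq_span_X] at hl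
  induction hl using Submodule.span_induction with
  | mem _ h =>
    obtain ⟨i, rfl⟩ := h
    simp [lineRestrict]
  | zero => simp
  | add l l' _ _ h h' =>
    simp only [map_add, h, h']
    ring
  | smul c l _ h =>
    simp only [map_smul, h, smul_add, Polynomial.smul_C, ← smul_mul_assoc]

/-- This is the identity `f(Tb + v) = T ^ t f(b + T⁻¹ v)`. -/
theorem reflect_lineRestrict (b v : σ → A) {f : MvPolynomial σ R} {t : ℕ}
    (hf : f.IsHomogeneous t) : (lineRestrict b v f).reflect t = lineRestrict v b f := by
  have hlinear {l : MvPolynomial σ R} (hl : l.IsHomogeneous 1) :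
      (lineRestrict b v l).reflect 1 = lineRestrict v b l := by
    rw [lineRestrict_of_isHomogeneous_one b v hl, lineRestrict_of_isHomogeneous_one v b hl,
      Polynomial.reflect_add, Polynomial.reflect_C, Polynomial.reflect_C_mul,
      Polynomial.reflect_one_X, pow_one, mul_one, add_comm]
  have hmem : f ∈ homogeneousSubmodule σ R 1 ^ t := by
    rwa [homogeneousSubmodule_one_pow]
  clear hf
  induction hmem using Submodule.pow_induction_on_left' with
  | algebraMap c => simp [algebraMap_eq, Polynomial.reflect_C]
  | add f g t _ _ ihf ihg =>
    rw [map_add, map_add, Polynomial.reflect_add, ihf, ihg]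
  | mem_mul l hl t f hf ih =>
    rw [homogeneousSubmodule_one_pow] at hf
    rw [map_mul, map_mul, Nat.succ_eq_one_add,
      Polynomial.reflect_mul _ _ (natDegree_lineRestrict_le b v hl)
        (natDegree_lineRestrict_le b v hf), hlinear hl, ih]

theorem X_sub_C_pow_dvd_lineRestrict {K : Type} [Field K] {A : Type*} [CommRing A]
    [Algebra K A] {N : ℕ} {p : Fin N → K} {b v : Fin N → A} {c r : A}
    (h : b + c • v = r • (algebraMap K A ∘ p)) {m : ℕ} {f : MvPolynomial (Fin N) K}
    (hf : f ∈ pointIdeal p ^ m) :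
    (Polynomial.X - Polynomial.C c) ^ m ∣ lineRestrict b v f := by
  have hle : pointIdeal p ≤
      (Ideal.span {Polynomial.X - Polynomial.C c}).comap (lineRestrict b v) := by
    rw [pointIdeal, Ideal.span_le]
    rintro l ⟨hl, hpl⟩
    have hroot : Polynomial.eval c (lineRestrict b v l) = 0 := by
      rw [eval_lineRestrict, h, aeval_smul_of_isHomogeneous hl, aeval_algebraMap_apply,
        aeval_eq_eval]
      simp [hpl]
    exact Ideal.mem_span_singleton.2 (Polynomial.dvd_iff_isRoot.2 hroot)
  have hmem := Ideal.le_comap_pow _ m (Ideal.pow_right_mono hle m hf)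
  rw [Ideal.span_singleton_pow] at hmem
  exact Ideal.mem_span_singleton.1 hmem

end LineRestriction

section PointIdeal

variable {K : Type} [Field K] {N : ℕ} {p : Fin N → K}

theorem eq_zero_of_mul_mem_pointIdeal_pow {G f : MvPolynomial (Fin N) K} {d : ℕ}
    (hG : eval p G ≠ 0) (hf : f.IsHomogeneous d) (h : G * f ∈ pointIdeal p ^ (d + 1)) :
    f = 0 := by
  -- Restrict to the generic line `T ↦ p + T x` through `p`.
  let φ : MvPolynomial (Fin N) K →ₐ[K] Polynomial (MvPolynomial (Fin N) K) :=
    lineRestrict (C ∘ p) X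
  have hdvd : Polynomial.X ^ (d + 1) ∣ φ G * φ f := by
    rw [← map_mul, ← sub_zero Polynomial.X, ← Polynomial.C_0]
    exact X_sub_C_pow_dvd_lineRestrict (r := 1) (by simp [algebraMap_eq]) h
  have hφG : ¬ Polynomial.X ∣ φ G := by
    rw [Polynomial.X_dvd_iff, Polynomial.coeff_zero_eq_eval_zero, eval_lineRestrict, zero_smul,
      add_zero, ← algebraMap_eq, aeval_algebraMap_apply, aeval_eq_eval, algebraMap_eq]
    simpa using hG
  have hφf : φ f = 0 := by
    by_contra hne
    have hle := Polynomial.natDegree_le_of_dvd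
      (Polynomial.prime_X.pow_dvd_of_dvd_mul_left _ hφG hdvd) hne
    rw [Polynomial.natDegree_X_pow] at hle
    have hdeg : (φ f).natDegree ≤ d := natDegree_lineRestrict_le _ _ hf
    omega
  have htranslate : aeval (C ∘ p + X) f = (0 : MvPolynomial (Fin N) K) := by
    rw [← one_smul (MvPolynomial (Fin N) K) X, ← eval_lineRestrict, hφf, Polynomial.eval_zero]
  have hinv := congrArg (aeval fun i => X i - C (p i)) htranslate
  rw [comp_aeval_apply, map_zero] at hinv
  simpa [algHom_C, algebraMap_eq] using hinv

theorem exists_sub_mul_mem_pointIdeal_pow {l f : MvPolynomial (Fin N) K} {d : ℕ}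
    (hl : l.IsHomogeneous 1) (hpl : eval p l ≠ 0) (hf : f.IsHomogeneous (d + 1)) :
    ∃ g : MvPolynomial (Fin N) K, g.IsHomogeneous d ∧ f - l * g ∈ pointIdeal p ^ (d + 1) := by
  have hlinear {a : MvPolynomial (Fin N) K} (ha : a.IsHomogeneous 1) :
      a - C (eval p a / eval p l) * l ∈ pointIdeal p :=
    Ideal.subset_span ⟨ha.sub (hl.C_mul _), by simp [hpl]⟩
  induction d generalizing f with
  | zero =>
    exact ⟨C (eval p f / eval p l), isHomogeneous_C _ _, by simpa [mul_comm] using hlinear hf⟩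
  | succ d ih =>
    have hmem : f ∈ homogeneousSubmodule (Fin N) K 1 * homogeneousSubmodule (Fin N) K (d + 1) := by
      rwa [← homogeneousSubmodule_one_pow _ (d + 1), ← pow_succ', homogeneousSubmodule_one_pow]
    clear hf
    induction hmem using Submodule.mul_induction_on' with
    | mem_mul_mem a ha b hb =>
      obtain ⟨g, hg, hbg⟩ := ih hb
      set c := C (eval p a / eval p l)
      refine ⟨a * g + c * (b - l * g), ?_, ?_⟩
      · refine IsHomogeneous.add ?_ (IsHomogeneous.C_mul (hb.sub ?_) _)
        · simpa only [add_comm] using IsHomogeneous.mul ha hg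
        · simpa only [add_comm] using hl.mul hg
      · rw [show a * b - l * (a * g + c * (b - l * g)) = (a - c * l) * (b - l * g) by ring,
          pow_succ']
        exact Ideal.mul_mem_mul (hlinear ha) hbg
    | add f _ f' _ hf hf' =>
      obtain ⟨g, hg, hfg⟩ := hf
      obtain ⟨g', hg', hfg'⟩ := hf'
      refine ⟨g + g', hg.add hg', ?_⟩
      rw [mul_add, add_sub_add_comm]
      exact add_mem hfg hfg'

theorem exists_sub_pow_mul_mem_pointIdeal_pow {l f : MvPolynomial (Fin N) K} {d e : ℕ}
    (hl : l.IsHomogeneous 1) (hpl : eval p l ≠ 0) (hf : f.IsHomogeneous (d + e)) :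
    ∃ g : MvPolynomial (Fin N) K,
      g.IsHomogeneous d ∧ f - l ^ e * g ∈ pointIdeal p ^ (d + 1) := by
  induction e generalizing f with
  | zero => exact ⟨f, hf, by simp⟩
  | succ e ih =>
    obtain ⟨g, hg, hfg⟩ := exists_sub_mul_mem_pointIdeal_pow (d := d + e) hl hpl hf
    obtain ⟨g', hg', hgg'⟩ := ih hg
    refine ⟨g', hg', ?_⟩
    rw [show f - l ^ (e + 1) * g' = (f - l * g) + l * (g - l ^ e * g') by ring]
    exact add_mem (Ideal.pow_le_pow_right (by omega) hfg) (Ideal.mul_mem_left _ _ hgg')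

theorem exists_isHomogeneous_one_eval_ne_zero (hp : p ≠ 0) :
    ∃ l : MvPolynomial (Fin N) K, l.IsHomogeneous 1 ∧ eval p l ≠ 0 := by
  obtain ⟨i, hi⟩ := Function.ne_iff.1 hp
  exact ⟨X i, isHomogeneous_X _ _, by simpa using hi⟩

theorem mem_pointIdeal_of_isHomogeneous (hp : p ≠ 0) {f : MvPolynomial (Fin N) K} {e : ℕ}
    (hf : f.IsHomogeneous e) (hpf : eval p f = 0) : f ∈ pointIdeal p := by
  obtain ⟨l, hl, hpl⟩ := exists_isHomogeneous_one_eval_ne_zero hp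
  obtain ⟨g, hg, hfg⟩ := exists_sub_pow_mul_mem_pointIdeal_pow (d := 0) hl hpl
    (by rwa [zero_add] : f.IsHomogeneous (0 + e))
  have hle : pointIdeal p ≤ RingHom.ker (eval p) := Ideal.span_le.2 fun _ h => h.2
  have hg0 : eval p g = 0 := by
    rw [zero_add, pow_one] at hfg
    simpa [hpf, hpl] using hle hfg
  rw [totalDegree_eq_zero_iff_eq_C.1 (Nat.le_zero.1 hg.totalDegree_le), eval_C] at hg0
  rw [totalDegree_eq_zero_iff_eq_C.1 (Nat.le_zero.1 hg.totalDegree_le), hg0] at hfg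
  simpa using hfg

end PointIdeal

section LinearAlgebra

variable {K V ι : Type*} [Field K] [AddCommGroup V] [Module K V]

theorem surjective_pi_mkQ_iff [Finite ι] {W : ι → Submodule K V} :
    Function.Surjective (LinearMap.pi fun i => (W i).mkQ) ↔
      ∀ i x, ∃ y, y - x ∈ W i ∧ ∀ j ≠ i, y ∈ W j := by
  classical
  cases nonempty_fintype ι
  constructor
  · intro h i x
    obtain ⟨y, hy⟩ := h (Pi.single i ((W i).mkQ x))
    refine ⟨y, ?_, fun j hj => ?_⟩
    · simpa [Submodule.Quotient.eq] using congrFun hy i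
    · simpa [hj] using congrFun hy j
  · intro h g
    choose x hx using fun i => (W i).mkQ_surjective (g i)
    choose y hy hy' using fun i => h i (x i)
    refine ⟨∑ i, y i, funext fun i => ?_⟩
    rw [LinearMap.pi_apply, map_sum, Finset.sum_eq_single i, ← hx i]
    · exact (Submodule.Quotient.eq _).2 (hy i)
    · exact fun j _ hj => (Submodule.Quotient.mk_eq_zero _).2 (hy' j i hj.symm)
    · exact fun hi => absurd (Finset.mem_univ i) hi

theorem finrank_quotient_iInf_eq_sum_iff [Fintype ι] [FiniteDimensional K V]
    {W : ι → Submodule K V} :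
    Module.finrank K (V ⧸ ⨅ i, W i) = ∑ i, Module.finrank K (V ⧸ W i) ↔
      ∀ i x, ∃ y, y - x ∈ W i ∧ ∀ j ≠ i, y ∈ W j := by
  have hker : LinearMap.ker (LinearMap.pi fun i => (W i).mkQ) = ⨅ i, W i := by
    simp only [LinearMap.ker_pi, Submodule.ker_mkQ]
  rw [← surjective_pi_mkQ_iff, ← LinearMap.range_eq_top, ← hker,
    (LinearMap.quotKerEquivRange _).finrank_eq, ← Module.finrank_pi_fintype]
  exact ⟨Submodule.eq_top_of_finrank_eq, fun h => by rw [h, finrank_top]⟩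

theorem exists_smul_add_smul_eq [FiniteDimensional K V] {u w x : V}
    (huw : LinearIndependent K ![u, w]) {W : Submodule K V} (hW : Module.finrank K W ≤ 2)
    (hu : u ∈ W) (hw : w ∈ W) (hx : x ∈ W) : ∃ a b : K, a • u + b • w = x := by
  have hle : Submodule.span K (Set.range ![u, w]) ≤ W := by
    simp [Submodule.span_le, Set.insert_subset_iff, hu, hw]
  have hspan : Submodule.span K (Set.range ![u, w]) = W :=
    Submodule.eq_of_le_of_finrank_le hle (by rwa [finrank_span_eq_card huw])
  rwa [← hspan, Matrix.range_cons_cons_empty, Submodule.mem_span_pair] at hx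

end LinearAlgebra

theorem exists_isHomogeneous_one_eval_eq {σ ι K : Type*} [Finite σ] [Field K]
    {v : ι → σ → K} (hv : LinearIndependent K v) (c : ι → K) :
    ∃ l : MvPolynomial σ K, l.IsHomogeneous 1 ∧ ∀ i, eval (v i) l = c i := by
  classical
  cases nonempty_fintype σ
  obtain ⟨φ, hφ⟩ : ∃ φ : (σ → K) →ₗ[K] K, _ :=
    ((Finsupp.linearCombination K c).comp hv.repr).exists_extend
  have hφv (i : ι) : φ (v i) = c i := by
    have hvi : v i ∈ Submodule.span K (Set.range v) := Submodule.subset_span ⟨i, rfl⟩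
    have h := LinearMap.congr_fun hφ ⟨v i, hvi⟩
    simpa [hv.repr_eq_single i ⟨v i, hvi⟩ rfl] using h
  refine ⟨∑ k, C (φ fun j => if k = j then 1 else 0) * X k,
    IsHomogeneous.sum _ _ _ fun k _ => (isHomogeneous_X _ _).C_mul _, fun i => ?_⟩
  rw [← hφv, LinearMap.pi_apply_eq_sum_univ φ (v i)]
  simp [mul_comm]

theorem sum_le_natDegree_of_X_sub_C_pow_dvd {K ι : Type*} [Field K] {S : Finset ι} {a : ι → K}
    (ha : Set.InjOn a S) {m : ι → ℕ} {q : Polynomial K} (hq : q ≠ 0)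
    (hdvd : ∀ j ∈ S, (Polynomial.X - Polynomial.C (a j)) ^ m j ∣ q) :
    ∑ j ∈ S, m j ≤ q.natDegree := by
  have hcoprime : (S : Set ι).Pairwise
      (Function.onFun IsCoprime fun j => (Polynomial.X - Polynomial.C (a j)) ^ m j) :=
    fun i hi j hj hij => (Polynomial.isCoprime_X_sub_C_of_isUnit_sub
      (sub_ne_zero.2 (ha.ne hi hj hij)).isUnit).pow
  have hdeg := Polynomial.natDegree_le_of_dvd (Finset.prod_dvd_of_coprime hcoprime hdvd) hq
  rw [Polynomial.natDegree_prod_of_monic _ _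
    fun j _ => (Polynomial.monic_X_sub_C (a j)).pow (m j)] at hdeg
  simpa using hdeg

section HilbertFunction

variable {K : Type} [Field K] {N n s t : ℕ}

instance finite_homogeneousSubmodule :
    Module.Finite K (homogeneousSubmodule (Fin N) K t) :=
  Module.Finite.iff_fg.2 (homogeneousSubmodule_fg _ _ t)

theorem finrank_homogeneousSubmodule (K : Type) [Field K] (n t : ℕ) :
    Module.finrank K (homogeneousSubmodule (Fin (n + 1)) K t) = (t + n).choose n := by
  have e : {d : Fin (n + 1) →₀ ℕ | d.degree = t} ≃ Sym (Fin (n + 1)) t :=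
    (Equiv.subtypeEquivRight fun d => by simp [Finsupp.degree_eq_sum, Finsupp.sum_fintype]).trans
      (Sym.equivNatSum _ _).symm
  rw [homogeneousSubmodule_eq_finsupp_supported,
    (AddMonoidAlgebra.supportedEquivFinsupp (R := K) (S := K)
      {d : Fin (n + 1) →₀ ℕ | d.degree = t}).finrank_eq,
    (Finsupp.domLCongr e : _ ≃ₗ[K] (_ →₀ K)).finrank_eq, Module.finrank_finsupp_self,
    Sym.card_sym_eq_choose, Fintype.card_fin, show n + 1 + t - 1 = t + n by omega,
    Nat.choose_symm_add]

/-- The graded piece `I_t` of an ideal `I`, as a subspace of the space of forms of degree `t`. -/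
def gradedPiece (I : Ideal (MvPolynomial (Fin N) K)) (t : ℕ) :
    Submodule K (homogeneousSubmodule (Fin N) K t) :=
  (I.restrictScalars K).submoduleOf (homogeneousSubmodule (Fin N) K t)

theorem mem_gradedPiece {I : Ideal (MvPolynomial (Fin N) K)}
    {f : homogeneousSubmodule (Fin N) K t} :
    f ∈ gradedPiece I t ↔ (f : MvPolynomial (Fin N) K) ∈ I :=
  Iff.rfl

theorem gradedPiece_fatIdeal (p : Fin s → Fin N → K) (m : Fin s → ℕ) (t : ℕ) :
    gradedPiece (fatIdeal p m) t = ⨅ i, gradedPiece (pointIdeal (p i) ^ m i) t := by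
  ext f
  simp only [fatIdeal, mem_gradedPiece, Submodule.mem_iInf]

theorem hilbFn_eq_finrank_quotient (I : Ideal (MvPolynomial (Fin N) K)) (t : ℕ) :
    hilbFn K I t = Module.finrank K (homogeneousSubmodule (Fin N) K t ⧸ gradedPiece I t) := by
  have hdim : gradedDim K I t = Module.finrank K (gradedPiece I t) := by
    rw [gradedDim, ← Submodule.map_comap_subtype, Submodule.finrank_map_subtype_eq]
    rfl
  rw [hilbFn, hdim, Submodule.finrank_quotient]

theorem hilbFn_le_choose (I : Ideal (MvPolynomial (Fin (n + 1)) K)) (t : ℕ) :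
    hilbFn K I t ≤ (t + n).choose n :=
  (Nat.sub_le _ _).trans (finrank_homogeneousSubmodule K n t).le

theorem le_of_hilbFn_eq_fatMult (hn : n ≠ 0) {I : Ideal (MvPolynomial (Fin (n + 1)) K)}
    {m : Fin s → ℕ} (h : hilbFn K I t = fatMult n m) (i : Fin s) : m i ≤ t + 1 := by
  obtain ⟨k, rfl⟩ := Nat.exists_eq_add_one_of_ne_zero hn
  by_contra! hlt
  have hterm : (m i + (k + 1) - 1).choose (k + 1) ≤ fatMult (k + 1) m :=
    Finset.single_le_sum (f := fun j => (m j + (k + 1) - 1).choose (k + 1))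
      (fun _ _ => Nat.zero_le _) (Finset.mem_univ i)
  have hmono : (t + (k + 1) + 1).choose (k + 1) ≤ (m i + (k + 1) - 1).choose (k + 1) :=
    Nat.choose_le_choose _ (by omega)
  have hpascal : (t + (k + 1) + 1).choose (k + 1) =
      (t + (k + 1)).choose k + (t + (k + 1)).choose (k + 1) := Nat.choose_succ_succ _ _
  have hpos : 0 < (t + (k + 1)).choose k := Nat.choose_pos (by omega)
  have hle := hilbFn_le_choose I t
  omega

variable {p : Fin N → K} {G : MvPolynomial (Fin N) K} {d e : ℕ}

/-- Multiplication by a form `G` of degree `e`, as a map from the forms of degree `d` to the degree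
`e + d` piece of the coordinate ring of the fat point `(d + 1)P`. -/
def mulFatPoint (p : Fin N → K) (hG : G.IsHomogeneous e) (d : ℕ) :
    homogeneousSubmodule (Fin N) K d →ₗ[K]
      homogeneousSubmodule (Fin N) K (e + d) ⧸ gradedPiece (pointIdeal p ^ (d + 1)) (e + d) :=
  (Submodule.mkQ _).comp ((LinearMap.mulLeft K G).restrict fun _ hf => hG.mul hf)

theorem mulFatPoint_injective (hG : G.IsHomogeneous e) (hpG : eval p G ≠ 0) :
    Function.Injective (mulFatPoint p hG d) := by
  rw [← LinearMap.ker_eq_bot, LinearMap.ker_eq_bot']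
  intro f hf
  exact Subtype.ext <| eq_zero_of_mul_mem_pointIdeal_pow hpG f.2 <|
    mem_gradedPiece.1 <| (Submodule.Quotient.mk_eq_zero _).1 hf

theorem mulFatPoint_surjective_iff (hG : G.IsHomogeneous e) :
    Function.Surjective (mulFatPoint p hG d) ↔
      ∀ f : MvPolynomial (Fin N) K, f.IsHomogeneous (e + d) →
        ∃ g : MvPolynomial (Fin N) K, g.IsHomogeneous d ∧ f - G * g ∈ pointIdeal p ^ (d + 1) := by
  constructor
  · intro h f hf
    obtain ⟨g, hg⟩ := h (Submodule.mkQ _ ⟨f, hf⟩)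
    exact ⟨g, g.2, mem_gradedPiece.1 ((Submodule.Quotient.eq _).1 hg.symm)⟩
  · intro h f
    obtain ⟨⟨f, hf⟩, rfl⟩ := Submodule.mkQ_surjective _ f
    obtain ⟨g, hg, hfg⟩ := h f hf
    exact ⟨⟨g, hg⟩, ((Submodule.Quotient.eq _).2 (mem_gradedPiece.2 hfg)).symm⟩

theorem finrank_quotient_gradedPiece_pointIdeal_pow (hp : p ≠ 0) (d e : ℕ) :
    Module.finrank K
        (homogeneousSubmodule (Fin N) K (e + d) ⧸ gradedPiece (pointIdeal p ^ (d + 1)) (e + d)) =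
      Module.finrank K (homogeneousSubmodule (Fin N) K d) := by
  obtain ⟨l, hl, hpl⟩ := exists_isHomogeneous_one_eval_ne_zero hp
  have hle : (l ^ e).IsHomogeneous e := by simpa using hl.pow e
  refine (LinearEquiv.ofBijective (mulFatPoint p hle d)
    ⟨mulFatPoint_injective hle (by simp [hpl]), ?_⟩).finrank_eq.symm
  rw [mulFatPoint_surjective_iff]
  intro f hf
  exact exists_sub_pow_mul_mem_pointIdeal_pow hl hpl (by rwa [add_comm])

theorem exists_sub_mul_mem_pointIdeal_pow_of_eval_ne_zero (hG : G.IsHomogeneous e)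
    (hpG : eval p G ≠ 0) (hp : p ≠ 0) {f : MvPolynomial (Fin N) K}
    (hf : f.IsHomogeneous (e + d)) :
    ∃ g : MvPolynomial (Fin N) K, g.IsHomogeneous d ∧ f - G * g ∈ pointIdeal p ^ (d + 1) := by
  have hinj : Function.Injective (mulFatPoint p hG d) := mulFatPoint_injective hG hpG
  have hsurj := (LinearMap.injective_iff_surjective_of_finrank_eq_finrank
    (finrank_quotient_gradedPiece_pointIdeal_pow hp d e).symm).1 hinj
  exact (mulFatPoint_surjective_iff hG).1 hsurj f hf

theorem hilbFn_fatIdeal_eq_fatMult_iff {p : Fin s → Fin (n + 1) → K} {m : Fin s → ℕ}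
    (hp : ∀ i, p i ≠ 0) (hm : ∀ i, m i ≠ 0) (hmt : ∀ i, m i ≤ t + 1) :
    hilbFn K (fatIdeal p m) t = fatMult n m ↔
      ∀ i, ∀ h : MvPolynomial (Fin (n + 1)) K, h.IsHomogeneous t →
        ∃ f : MvPolynomial (Fin (n + 1)) K, f.IsHomogeneous t ∧
          f - h ∈ pointIdeal (p i) ^ m i ∧ ∀ j ≠ i, f ∈ pointIdeal (p j) ^ m j := by
  have hsum : fatMult n m = ∑ i, Module.finrank K
      (homogeneousSubmodule (Fin (n + 1)) K t ⧸ gradedPiece (pointIdeal (p i) ^ m i) t) := by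
    refine Finset.sum_congr rfl fun i _ => ?_
    obtain ⟨d, hd⟩ := Nat.exists_eq_add_one_of_ne_zero (hm i)
    obtain ⟨e, rfl⟩ := Nat.exists_eq_add_of_le' (Nat.le_of_succ_le_succ (hd ▸ hmt i))
    rw [hd, finrank_quotient_gradedPiece_pointIdeal_pow (hp i), finrank_homogeneousSubmodule,
      show d + 1 + n - 1 = d + n by omega]
  rw [hsum, hilbFn_eq_finrank_quotient, gradedPiece_fatIdeal, finrank_quotient_iInf_eq_sum_iff]
  simp only [Subtype.forall, Subtype.exists, mem_gradedPiece, mem_homogeneousSubmodule,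
    AddSubgroupClass.coe_sub, exists_prop]

end HilbertFunction

section Separators

variable {K : Type} [Field K] {N n s e m t : ℕ}

/-- Forms of degree `e`, the `i`-th of which vanishes at all the points `p j` except `p i`. -/
structure IsSeparatingFamily (p : Fin s → Fin N → K) (e : ℕ)
    (F : Fin s → MvPolynomial (Fin N) K) : Prop where
  isHomogeneous (i : Fin s) : (F i).IsHomogeneous e
  eval_self_ne_zero (i : Fin s) : eval (p i) (F i) ≠ 0
  eval_eq_zero {i j : Fin s} (hij : i ≠ j) : eval (p j) (F i) = 0

theorem IsSeparatingFamily.projDistinct {p : Fin s → Fin N → K}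
    {F : Fin s → MvPolynomial (Fin N) K} (hF : IsSeparatingFamily p e F) (he : e ≠ 0) :
    ProjDistinct p := by
  constructor
  · intro i hi
    have h := eval_smul_of_isHomogeneous (hF.isHomogeneous i) 0 (p i)
    rw [zero_smul, ← hi, zero_pow he, zero_mul] at h
    exact hF.eval_self_ne_zero i h
  · intro i j hij c hc
    apply hF.eval_self_ne_zero i
    rw [hc, eval_smul_of_isHomogeneous (hF.isHomogeneous i), hF.eval_eq_zero hij, mul_zero]

theorem IsSeparatingFamily.hilbFn_eq_fatMult {p : Fin s → Fin (n + 1) → K}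
    {F : Fin s → MvPolynomial (Fin (n + 1)) K} (hF : IsSeparatingFamily p e F) (he : e ≠ 0)
    (hm : m ≠ 0) (ht : t + 1 = (e + 1) * m) :
    hilbFn K (fatIdeal p fun _ => m) t = fatMult n fun _ : Fin s => m := by
  have hp : ∀ i, p i ≠ 0 := (hF.projDistinct he).1
  obtain ⟨d, rfl⟩ := Nat.exists_eq_add_one_of_ne_zero hm
  obtain rfl : t = e * (d + 1) + d := by linarith
  rw [hilbFn_fatIdeal_eq_fatMult_iff hp (fun _ => hm) (fun _ => by omega)]
  intro i h hh
  have hFi : (F i ^ (d + 1)).IsHomogeneous (e * (d + 1)) := (hF.isHomogeneous i).pow (d + 1)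
  obtain ⟨g, hg, hfg⟩ := exists_sub_mul_mem_pointIdeal_pow_of_eval_ne_zero hFi
    (by simpa using hF.eval_self_ne_zero i) (hp i) hh
  refine ⟨F i ^ (d + 1) * g, hFi.mul hg, sub_mem_comm_iff.1 hfg, fun j hj => ?_⟩
  exact Ideal.mul_mem_right _ _ <| Ideal.pow_mem_pow
    (mem_pointIdeal_of_isHomogeneous (hp j) (hF.isHomogeneous i) (hF.eval_eq_zero hj.symm)) _

end Separators

section PointsOnLine

variable {K : Type} [Field K] {N n s t : ℕ}

theorem coeff_lineRestrict_eq_zero_of_mem_pointIdeal_pow {u w : Fin N → K}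
    {f : MvPolynomial (Fin N) K} {m k : ℕ} (hf : f.IsHomogeneous t)
    (hfu : f ∈ pointIdeal u ^ m) (hk : t < k + m) :
    (lineRestrict w u f).coeff k = 0 := by
  rcases lt_or_ge t k with htk | hkt
  · exact Polynomial.coeff_eq_zero_of_natDegree_lt
      ((natDegree_lineRestrict_le w u hf).trans_lt htk)
  · have hdvd : Polynomial.X ^ m ∣ lineRestrict u w f := by
      rw [← sub_zero Polynomial.X, ← Polynomial.C_0]
      exact X_sub_C_pow_dvd_lineRestrict (r := 1) (by ext; simp) hfu
    rw [← reflect_lineRestrict u w hf, Polynomial.coeff_reflect, Polynomial.revAt_le hkt]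
    exact Polynomial.X_pow_dvd_iff.1 hdvd _ (by omega)

/-- The restriction of `f` to the line is a polynomial of degree `t + 1 - m i₀` in the coordinate
for which `p i₀` is the point at infinity, and it vanishes to order `m j` at each `a j`. -/
theorem sum_le_of_hilbFn_eq_fatMult_of_line {p : Fin s → Fin (n + 1) → K} {m : Fin s → ℕ}
    (hn : n ≠ 0) (hp : ∀ i, p i ≠ 0) (hm : ∀ i, m i ≠ 0)
    (h : hilbFn K (fatIdeal p m) t = fatMult n m) {i₀ : Fin s} {w : Fin (n + 1) → K}
    (hw : LinearIndependent K ![p i₀, w]) {S : Finset (Fin s)} (hS : i₀ ∉ S) {a r : Fin s → K}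
    (ha : Set.InjOn a S) (hline : ∀ j ∈ S, w + a j • p i₀ = r j • p j) :
    m i₀ + ∑ j ∈ S, m j ≤ t + 1 := by
  have hmt := le_of_hilbFn_eq_fatMult hn h
  obtain ⟨k, hk⟩ := Nat.exists_eq_add_of_le (hmt i₀)
  obtain ⟨d, hd⟩ := Nat.exists_eq_add_one_of_ne_zero (hm i₀)
  obtain rfl : t = k + d := by omega
  obtain ⟨l, hl, hlv⟩ := exists_isHomogeneous_one_eval_eq hw ![1, 0]
  obtain ⟨l', hl', hlv'⟩ := exists_isHomogeneous_one_eval_eq hw ![0, 1]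
  simp only [Fin.forall_fin_two, Matrix.cons_val_zero, Matrix.cons_val_one] at hlv hlv'
  have hg : (l ^ k * l' ^ d).IsHomogeneous (k + d) := by
    simpa using (hl.pow k).mul (hl'.pow d)
  obtain ⟨f, hf, hfg, hfj⟩ := (hilbFn_fatIdeal_eq_fatMult_iff hp hm hmt).1 h i₀ _ hg
  set q := lineRestrict w (p i₀) f
  have hq (c : ℕ) (hc : k ≤ c) : q.coeff c = (Polynomial.X ^ k).coeff c := by
    have hgX : lineRestrict w (p i₀) (l ^ k * l' ^ d) = Polynomial.X ^ k := by
      simp [lineRestrict_of_isHomogeneous_one, hl, hl', aeval_eq_eval, hlv, hlv']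
    rw [← sub_eq_zero, ← Polynomial.coeff_sub, ← hgX, ← map_sub]
    exact coeff_lineRestrict_eq_zero_of_mem_pointIdeal_pow (hf.sub hg) hfg (by omega)
  have hqdeg : q.natDegree ≤ k := Polynomial.natDegree_le_iff_coeff_eq_zero.2 fun c hc => by
    rw [hq c hc.le, Polynomial.coeff_X_pow, if_neg hc.ne']
  have hq0 : q ≠ 0 := fun hq0 => by simpa [hq0] using hq k le_rfl
  have hsum : ∑ j ∈ S, m j ≤ q.natDegree :=
    sum_le_natDegree_of_X_sub_C_pow_dvd ha hq0 fun j hj => X_sub_C_pow_dvd_lineRestrict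
      (hline j hj) (hfj j (ne_of_mem_of_not_mem hj hS))
  omega

theorem sum_le_of_hilbFn_eq_fatMult {p : Fin s → Fin (n + 1) → K} {m : Fin s → ℕ} (hn : n ≠ 0)
    (hp : ProjDistinct p) (hm : ∀ i, m i ≠ 0) {Q : Finset (Fin s)} (hQ : OnLinearSubspace p Q 1)
    (h : hilbFn K (fatIdeal p m) t = fatMult n m) : ∑ i ∈ Q, m i ≤ t + 1 := by
  rcases Q.eq_empty_or_nonempty with rfl | ⟨i₀, hi₀⟩
  · simp
  rcases Finset.eq_singleton_or_nontrivial hi₀ with rfl | hnontriv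
  · simpa using le_of_hilbFn_eq_fatMult hn h i₀
  obtain ⟨i₁, hi₁, hne⟩ := hnontriv.exists_ne i₀
  obtain ⟨W, hW, hpW⟩ := hQ
  have hli : LinearIndependent K ![p i₀, p i₁] :=
    (LinearIndependent.pair_iff' (hp.1 i₀)).2 fun c hc => hp.2 i₁ i₀ hne c hc.symm
  have hcoord (j : Fin s) (hj : j ∈ Q.erase i₀) :
      ∃ a r : K, r ≠ 0 ∧ p i₁ + a • p i₀ = r • p j := by
    obtain ⟨hji, hjQ⟩ := Finset.mem_erase.1 hj
    obtain ⟨x, y, hxy⟩ :=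
      exists_smul_add_smul_eq hli hW (hpW i₀ hi₀) (hpW i₁ hi₁) (hpW j hjQ)
    have hy : y ≠ 0 := by
      rintro rfl
      exact hp.2 j i₀ hji x (by simpa using hxy.symm)
    refine ⟨y⁻¹ * x, y⁻¹, inv_ne_zero hy, ?_⟩
    rw [← hxy, smul_add, smul_smul, smul_smul, inv_mul_cancel₀ hy, one_smul, add_comm (p i₁)]
  choose! a r hr hline using hcoord
  have ha : Set.InjOn a (Q.erase i₀) := by
    intro j hj k hk hjk
    by_contra hne
    refine hp.2 j k hne ((r j)⁻¹ * r k) ?_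
    rw [mul_smul, ← hline k hk, ← hjk, hline j hj, inv_smul_smul₀ (hr j hj)]
  rw [← Finset.add_sum_erase _ _ hi₀]
  exact sum_le_of_hilbFn_eq_fatMult_of_line hn hp.1 hm h hli (Finset.notMem_erase i₀ Q) ha hline

end PointsOnLine

section Bounds

variable {K : Type} [Field K] {N n s e m j : ℕ}

theorem regFat_eq_of_isSeparatingFamily (hn : n ≠ 0) {p : Fin s → Fin (n + 1) → K}
    {F : Fin s → MvPolynomial (Fin (n + 1)) K} (hF : IsSeparatingFamily p e F) (he : e ≠ 0)
    (hm : m ≠ 0) {Q : Finset (Fin s)} (hQ : OnLinearSubspace p Q 1) (hcard : Q.card = e + 1) :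
    regFat K p (fun _ => m) = (e + 1) * m - 1 := by
  have hpos : 0 < (e + 1) * m := by positivity
  refine IsLeast.csInf_eq ⟨hF.hilbFn_eq_fatMult he hm (by omega), fun t ht => ?_⟩
  have hsum := sum_le_of_hilbFn_eq_fatMult hn (hF.projDistinct he) (fun _ => hm) hQ ht
  rw [Finset.sum_const, hcard, smul_eq_mul] at hsum
  omega

theorem segreBound_le_iff {p : Fin s → Fin (n + 1) → K} {m : Fin s → ℕ} {B : ℕ} :
    segreBound n p m ≤ B ↔ ∀ j, 1 ≤ j → j ≤ n → ∀ Q : Finset (Fin s), Q.Nonempty →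
      OnLinearSubspace p Q j → (∑ i ∈ Q, m i + j - 2) / j ≤ B := by
  simp only [segreBound, Finset.sup_le_iff, Finset.mem_Icc, Finset.powerset_univ, Finset.mem_univ,
    forall_const, and_imp]
  refine forall₄_congr fun j _ _ Q => ?_
  split_ifs with h <;> simp_all

theorem card_le_of_onLinearSubspace {p : Fin s → Fin N → K} {P Q : Finset (Fin s)}
    (hP : LinearIndepOn K p P) (hQ : OnLinearSubspace p Q j) : Q.card ≤ j + 1 + Pᶜ.card := by
  obtain ⟨W, hW, hpW⟩ := hQ
  have hli : LinearIndependent K fun i : ↥(Q ∩ P) =>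
      (⟨p i, hpW i (Finset.mem_of_mem_inter_left i.2)⟩ : W) :=
    LinearIndependent.of_comp W.subtype (hP.mono (by simp))
  have hinter : (Q ∩ P).card ≤ j + 1 := by
    simpa only [Fintype.card_coe] using hli.fintype_card_le_finrank.trans hW
  have hsdiff : (Q \ P).card ≤ Pᶜ.card := Finset.card_le_card fun i => by simp
  rw [← Finset.card_inter_add_card_sdiff Q P]
  omega

end Bounds

section EdgePoints

variable {K : Type} [Field K] {N n r m j : ℕ}

/-- The coordinate points `e_i` together with the points `e_{u c} - e_{v c}`, one on each of the
coordinate lines selected by the edges `c ↦ {u c, v c}` of a graph on the coordinate points. -/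
def edgePoints (K : Type) [Field K] (u v : Fin r → Fin N) : Fin (N + r) → Fin N → K :=
  Fin.append (fun i => Pi.single i 1) fun c => Pi.single (u c) 1 - Pi.single (v c) 1

/-- The quadrics separating `edgePoints`: the hyperplane `∑ X_j = 0` contains every
`e_{u c} - e_{v c}`. -/
def edgeQuadrics (K : Type) [Field K] (u v : Fin r → Fin N) :
    Fin (N + r) → MvPolynomial (Fin N) K :=
  Fin.append (fun i => X i * ∑ j, X j) fun c => X (u c) * X (v c)

theorem mem_of_edgePoints_natAdd_ne_zero {u v : Fin r → Fin N} {c : Fin r} {i : Fin N}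
    (h : edgePoints K u v (Fin.natAdd N c) i ≠ 0) : i ∈ s(u c, v c) := by
  contrapose! h
  rw [Sym2.mem_iff, not_or] at h
  simp [edgePoints, h.1, h.2]

theorem isSeparatingFamily_edgeQuadrics {u v : Fin r → Fin N} (hne : ∀ c, u c ≠ v c)
    (hinj : Function.Injective fun c => s(u c, v c)) :
    IsSeparatingFamily (edgePoints K u v) 2 (edgeQuadrics K u v) where
  isHomogeneous i := by
    have hsum : (∑ j, X j : MvPolynomial (Fin N) K).IsHomogeneous 1 :=
      IsHomogeneous.sum _ _ _ fun j _ => isHomogeneous_X K j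
    cases i using Fin.addCases with
    | left i => simpa [edgeQuadrics] using (isHomogeneous_X K i).mul hsum
    | right c => simpa [edgeQuadrics] using (isHomogeneous_X K (u c)).mul (isHomogeneous_X K (v c))
  eval_self_ne_zero i := by
    cases i using Fin.addCases with
    | left i => simp [edgeQuadrics, edgePoints]
    | right c => simp [edgeQuadrics, edgePoints, hne c, (hne c).symm]
  eval_eq_zero {i k} hik := by
    cases i using Fin.addCases with
    | left i =>
      cases k using Fin.addCases with
      | left k =>
        have hik' : i ≠ k := fun h => hik (congrArg _ h)
        simp [edgeQuadrics, edgePoints, hik']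
      | right c => simp [edgeQuadrics, edgePoints]
    | right c =>
      cases k using Fin.addCases with
      | left k =>
        by_cases hk : k = u c
        · simp [edgeQuadrics, edgePoints, hk, hne c]
        · simp [edgeQuadrics, edgePoints, hk]
      | right c' =>
        have hcc' : s(u c, v c) ≠ s(u c', v c') := fun h => hik (congrArg _ (hinj h))
        by_contra h
        simp only [edgeQuadrics, Fin.append_right, map_mul, eval_X] at h
        have hu := mem_of_edgePoints_natAdd_ne_zero (left_ne_zero_of_mul h)
        have hv := mem_of_edgePoints_natAdd_ne_zero (right_ne_zero_of_mul h)
        exact hcc' ((Sym2.mem_and_mem_iff (hne c)).1 ⟨hu, hv⟩).symm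

theorem linearIndepOn_edgePoints (u v : Fin r → Fin N) :
    LinearIndepOn K (edgePoints K u v) ↑(Finset.univ.map (Fin.castAddEmb (n := N) r)) := by
  rw [Finset.coe_map, Finset.coe_univ, Set.image_univ,
    linearIndepOn_range_iff (Fin.castAddEmb r).injective]
  have h : edgePoints K u v ∘ Fin.castAddEmb r = Pi.basisFun K (Fin N) := by
    ext i; simp [edgePoints]
  exact h ▸ (Pi.basisFun K (Fin N)).linearIndependent

theorem span_range_edgePoints (u v : Fin r → Fin N) :
    Submodule.span K (Set.range (edgePoints K u v)) = ⊤ := by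
  rw [eq_top_iff, ← (Pi.basisFun K (Fin N)).span_eq]
  refine Submodule.span_mono ?_
  rintro _ ⟨i, rfl⟩
  exact ⟨Fin.castAdd r i, by simp [edgePoints]⟩

theorem card_le_of_onLinearSubspace_edgePoints {u v : Fin r → Fin N} {Q : Finset (Fin (N + r))}
    (hQ : OnLinearSubspace (edgePoints K u v) Q j) : Q.card ≤ j + 1 + r := by
  have h := card_le_of_onLinearSubspace (linearIndepOn_edgePoints u v) hQ
  simpa [Finset.card_compl] using h

/-- The indices in `edgePoints` of the coordinate points in `A` and the edges in `S`. -/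
def edgePointsIndex (A : Finset (Fin N)) (S : Finset (Fin r)) : Finset (Fin (N + r)) :=
  (A.disjSum S).map finSumFinEquiv.toEmbedding

theorem card_edgePointsIndex (A : Finset (Fin N)) (S : Finset (Fin r)) :
    (edgePointsIndex A S).card = A.card + S.card := by
  rw [edgePointsIndex, Finset.card_map, Finset.card_disjSum]

theorem onLinearSubspace_edgePointsIndex {u v : Fin r → Fin N} {A : Finset (Fin N)}
    {S : Finset (Fin r)} (hA : A.card ≤ j + 1) (hS : ∀ c ∈ S, u c ∈ A ∧ v c ∈ A) :
    OnLinearSubspace (edgePoints K u v) (edgePointsIndex A S) j := by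
  classical
  let b : Fin N → Fin N → K := fun i => Pi.single i 1
  have hb (i : Fin N) (hi : i ∈ A) : b i ∈ Submodule.span K (A.image b : Set (Fin N → K)) :=
    Submodule.subset_span (Finset.mem_image_of_mem b hi)
  refine ⟨Submodule.span K (A.image b : Set (Fin N → K)),
    (finrank_span_finset_le_card _).trans (Finset.card_image_le.trans hA), fun i hi => ?_⟩
  cases i using Fin.addCases with
  | left i =>
    have hiA : i ∈ A := by simpa [edgePointsIndex] using hi
    simpa [edgePoints] using hb i hiA
  | right c =>
    have hcS : c ∈ S := by simpa [edgePointsIndex] using hi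
    simpa [edgePoints] using sub_mem (hb _ (hS c hcS).1) (hb _ (hS c hcS).2)

theorem regFat_edgePoints {u v : Fin r → Fin (n + 1)} (hne : ∀ c, u c ≠ v c)
    (hinj : Function.Injective fun c => s(u c, v c)) (hr : r ≠ 0) (hm : m ≠ 0) :
    regFat K (edgePoints K u v) (fun _ => m) = 3 * m - 1 := by
  let c : Fin r := ⟨0, Nat.pos_of_ne_zero hr⟩
  have hn : n ≠ 0 := by
    rintro rfl
    exact hne c (Subsingleton.elim (α := Fin 1) _ _)
  have hcard : (edgePointsIndex {u c, v c} {c}).card = 2 + 1 := by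
    rw [card_edgePointsIndex, Finset.card_pair (hne c), Finset.card_singleton]
  refine regFat_eq_of_isSeparatingFamily hn (isSeparatingFamily_edgeQuadrics hne hinj)
    two_ne_zero hm (onLinearSubspace_edgePointsIndex ?_ ?_) hcard
  · exact Finset.card_le_two
  · simp

theorem segreBound_edgePoints_triangle {u v : Fin 3 → Fin (n + 1)} (hne : ∀ c, u c ≠ v c)
    (hinj : Function.Injective fun c => s(u c, v c)) {A : Finset (Fin (n + 1))} (hA : A.card = 3)
    (huvA : ∀ c, u c ∈ A ∧ v c ∈ A) (hm : m ≠ 0) :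
    segreBound n (edgePoints K u v) (fun _ => m) = 3 * m := by
  have hn : 2 ≤ n := by
    simpa [hA] using A.card_le_univ
  apply le_antisymm
  · rw [segreBound_le_iff]
    intro j hj1 _ Q _ hQ
    rcases hj1.eq_or_lt with rfl | hj2
    · have hF := isSeparatingFamily_edgeQuadrics (K := K) hne hinj
      have hsum := sum_le_of_hilbFn_eq_fatMult (by omega) (hF.projDistinct two_ne_zero)
        (fun _ => hm) hQ (hF.hilbFn_eq_fatMult (t := 3 * m - 1) two_ne_zero hm (by omega))
      omega
    · rw [Finset.sum_const, smul_eq_mul]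
      have hQm : Q.card * m ≤ (j + 4) * m :=
        Nat.mul_le_mul_right m (card_le_of_onLinearSubspace_edgePoints hQ)
      have hjm : (j + 4) * m ≤ j * (3 * m) := by nlinarith
      rw [Nat.div_le_iff_le_mul_add_pred (by omega)]
      omega
  · have hplane : OnLinearSubspace (edgePoints K u v) (edgePointsIndex A Finset.univ) 2 :=
      onLinearSubspace_edgePointsIndex hA.le fun c _ => huvA c
    have hcard : (edgePointsIndex A (Finset.univ : Finset (Fin 3))).card = 6 := by
      rw [card_edgePointsIndex, hA, Finset.card_fin]
    have h := (segreBound_le_iff (m := fun _ => m)).1 le_rfl 2 one_le_two hn _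
      (Finset.card_pos.1 (by omega)) hplane
    rw [Finset.sum_const, hcard, smul_eq_mul] at h
    omega

end EdgePoints

theorem stmt13_general {K : Type} [Field K] (m n : ℕ) (hm : 0 < m) (hn : 2 ≤ n) :
    ∃ p : Fin (n + 4) → Fin (n + 1) → K, ProjDistinct p ∧
      Submodule.span K (Set.range p) = ⊤ ∧
      regFat K p (fun _ => m) = 3 * m - 1 ∧
      segreBound n p (fun _ => m) = 3 * m ∧
      regFat K p (fun _ => m) < segreBound n p (fun _ => m) := by
  let ι : Fin 3 ↪ Fin (n + 1) := Fin.castLEEmb (by omega)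
  let u : Fin 3 → Fin (n + 1) := fun c => ι (c + 1)
  let v : Fin 3 → Fin (n + 1) := fun c => ι (c + 2)
  have hne (c : Fin 3) : u c ≠ v c := ι.injective.ne (by decide +revert)
  have hinj : Function.Injective fun c => s(u c, v c) :=
    (Sym2.map.injective ι.injective).comp
      (by decide : Function.Injective fun c : Fin 3 => s(c + 1, c + 2))
  have huv (c : Fin 3) : u c ∈ Finset.univ.map ι ∧ v c ∈ Finset.univ.map ι := by simp [u, v]
  have hreg : regFat K (edgePoints K u v) (fun _ => m) = 3 * m - 1 :=
    regFat_edgePoints hne hinj three_ne_zero hm.ne'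
  have hsegre : segreBound n (edgePoints K u v) (fun _ => m) = 3 * m :=
    segreBound_edgePoints_triangle hne hinj (by simp) huv hm.ne'
  refine ⟨edgePoints K u v, (isSeparatingFamily_edgeQuadrics hne hinj).projDistinct two_ne_zero,
    span_range_edgePoints u v, hreg, hsegre, ?_⟩
  rw [hreg, hsegre]
  exact Nat.sub_lt (by positivity) one_pos

/-- Corollary 4.5: for every `m ≥ 1` and `n ≥ 2` there exist `n+4` non-degenerate
equimultiple fat points in `ℙⁿ` with `reg(Z) = 3m - 1 < T(Z) = 3m`. -/
theorem stmt13 {K : Type} [Field K] [IsAlgClosed K] (m n : ℕ) (hm : 0 < m) (hn : 2 ≤ n) :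
    ∃ p : Fin (n + 4) → Fin (n + 1) → K, ProjDistinct p ∧
      Submodule.span K (Set.range p) = ⊤ ∧
      regFat K p (fun _ => m) = 3 * m - 1 ∧
      segreBound n p (fun _ => m) = 3 * m ∧
      regFat K p (fun _ => m) < segreBound n p (fun _ => m) :=
  stmt13_general m n hm hn
end
end

section
/- Let n ≥ 3, 2 ≤ s ≤ n+2, and let P_1,...,P_s be distinct points in linearly general position in P^n. If m_1 ≥ m_2 ≥ ... ≥ m_s > 0 are integers with m_1 ≥ 2 and I = ℘_1^{m_1} ∩ ... ∩ ℘_s^{m_s}, then reg(R/I) = m_1 + m_2 - 1. -/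
open MvPolynomial

noncomputable section

/-!
Since `I` is an intersection of ideals that are powers of ideals of points, the Hilbert function of
`R/I` in degree `t` is the rank of the map sending a form of degree `t` to its jets of order `m_i`
at the points `P_i`, and it equals the multiplicity exactly when this map is onto. A form whose jet
at `P_1` is `x ^ (m_1 - 1)`, with `x` the coordinate along the line `P_1 P_2`, can vanish to order
`m_2` at `P_2` only if its degree is at least `m_1 + m_2 - 1`.

Conversely, in degree `m_1 + m_2 - 1` the map is onto as soon as, for every point `P_i` and jet
exponent `α`, some form vanishes to order `m_j` at each other point `P_j` and has leading jet `α` at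
`P_i`: the matrix of jets of these forms is triangular. If `s ≤ n + 1`, take the points as
coordinate points and multiply the monomial `α` by a power of the coordinate dual to `P_i`. If
`s = n + 2`, take coordinates at all points but some `P_q` and multiply the monomial `α` by
hyperplanes through all points but `P_i` and one other `P_l`. The numbers of factors for each `l`
exist by a count that uses `m_1 ≥ 2` and `n ≥ 3`.
-/

open Module (Basis finrank)

namespace FatPoints

theorem eq_top_of_triangular {K σ : Type*} [DivisionRing K] [Finite σ]
    {W : Submodule K (σ → K)} (rank : σ → ℕ)
    (h : ∀ x, ∃ v ∈ W, v x ≠ 0 ∧ ∀ y ≠ x, v y ≠ 0 → rank x < rank y) : W = ⊤ := by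
  classical
  have := Fintype.ofFinite σ
  have hwf : WellFounded fun x y => rank y < rank x :=
    have : IsTrans σ fun x y => rank y < rank x := ⟨fun _ _ _ h h' => h'.trans h⟩
    have : Std.Irrefl fun x y => rank y < rank x := ⟨fun _ => lt_irrefl _⟩
    Finite.wellFounded_of_trans_of_irrefl _
  have hsingle (x : σ) : Pi.single x 1 ∈ W := by
    induction x using hwf.induction with
    | h x ih =>
    obtain ⟨v, hv, hvx, hrank⟩ := h x
    have hrest : ∑ y ∈ Finset.univ.erase x, v y • (Pi.single y 1 : σ → K) ∈ W := by
      refine W.sum_mem fun y hy => ?_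
      obtain hvy | hvy := eq_or_ne (v y) 0
      · simp [hvy]
      · exact W.smul_mem _ (ih y (hrank y (Finset.ne_of_mem_erase hy) hvy))
    rw [pi_eq_sum_univ' v, ← Finset.add_sum_erase _ _ (Finset.mem_univ x)] at hv
    exact (W.smul_mem_iff hvx).1 ((W.add_mem_iff_left hrest).1 hv)
  rw [eq_top_iff]
  intro v _
  rw [pi_eq_sum_univ' v]
  exact W.sum_mem fun x _ => W.smul_mem _ (hsingle x)

theorem exists_basis_extending {K V σ ι : Type*} [DivisionRing K] [AddCommGroup V] [Module K V]
    {v : σ → V} (hv : LinearIndependent K v) (b₀ : Basis ι K V) :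
    ∃ (b : Basis ι K V) (e : σ ↪ ι), ∀ i, b (e i) = v i := by
  let e := (Basis.sumExtend hv).indexEquiv b₀
  refine ⟨(Basis.sumExtend hv).reindex e, Function.Embedding.inl.trans e.toEmbedding, fun i => ?_⟩
  have hinl : Basis.sumExtend hv (.inl i) = v i := by
    rw [Basis.sumExtend, Basis.reindex_apply, Basis.extend_apply_self]
    rfl
  simpa using hinl

section PointOrder

variable {R : Type*} [CommSemiring R] {ι : Type*}

theorem degree_strictMono : StrictMono (Finsupp.degree : (ι →₀ ℕ) → ℕ) := by
  intro α β h
  obtain ⟨γ, rfl⟩ := exists_add_of_le h.le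
  rw [map_add, Nat.lt_add_right_iff_pos, Nat.pos_iff_ne_zero, ne_eq, Finsupp.degree_eq_zero_iff]
  rintro rfl
  exact h.ne (add_zero α).symm

theorem degree_erase_add_apply (k : ι) (α : ι →₀ ℕ) : (α.erase k).degree + α k = α.degree := by
  simpa using congrArg Finsupp.degree (α.erase_add_single k)

theorem erase_eq_zero_iff_eq_single_degree {k : ι} {α : ι →₀ ℕ} :
    α.erase k = 0 ↔ α = Finsupp.single k α.degree := by
  refine ⟨fun h => ?_, fun h => by rw [h, Finsupp.erase_single]⟩
  have hα := α.erase_add_single k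
  rw [h, zero_add] at hα
  nth_rewrite 2 [← hα]
  rw [Finsupp.degree_single, hα]

/-- The `m`-th power of the ideal of the `k`-th coordinate point: the polynomials all of whose
monomials have degree at least `m` in the variables other than `X k`. It is given by its monomials
rather than as a power so that membership can be read off coefficients. -/
def coordPointIdealPow (R : Type*) [CommSemiring R] (k : ι) (m : ℕ) :
    Ideal (MvPolynomial ι R) where
  carrier := {f | ∀ α ∈ f.support, m ≤ (α.erase k).degree}
  zero_mem' := by simp
  add_mem' := by
    classical
    intro f g hf hg α hα
    exact (Finset.mem_union.1 (support_add hα)).elim (hf α) (hg α)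
  smul_mem' := by
    classical
    intro c f hf α hα
    obtain ⟨β, -, γ, hγ, rfl⟩ := Finset.mem_add.1 (support_mul c f hα)
    rw [Finsupp.erase_add, map_add]
    exact (hf γ hγ).trans le_add_self

theorem mem_coordPointIdealPow {k : ι} {m : ℕ} {f : MvPolynomial ι R} :
    f ∈ coordPointIdealPow R k m ↔ ∀ α ∈ f.support, m ≤ (α.erase k).degree :=
  Iff.rfl

theorem coordPointIdealPow_mul_le (k : ι) (m m' : ℕ) :
    coordPointIdealPow R k m * coordPointIdealPow R k m' ≤ coordPointIdealPow R k (m + m') := by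
  classical
  rw [Ideal.mul_le]
  intro f hf g hg α hα
  obtain ⟨β, hβ, γ, hγ, rfl⟩ := Finset.mem_add.1 (support_mul f g hα)
  rw [Finsupp.erase_add, map_add]
  exact add_le_add (hf β hβ) (hg γ hγ)

theorem coordPointIdealPow_one_pow_le (k : ι) (m : ℕ) :
    coordPointIdealPow R k 1 ^ m ≤ coordPointIdealPow R k m := by
  induction m with
  | zero => exact fun f _ α _ => Nat.zero_le _
  | succ m ih =>
    rw [pow_succ]
    exact (Ideal.mul_mono_left ih).trans (coordPointIdealPow_mul_le k m 1)

theorem coeff_single_eq_eval_single [DecidableEq ι] {f : MvPolynomial ι R} {t : ℕ}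
    (hf : f.IsHomogeneous t) (k : ι) :
    coeff (Finsupp.single k t) f = eval (Pi.single k 1) f := by
  rw [eval_eq, Finset.sum_eq_single (Finsupp.single k t)]
  · rw [Finset.prod_eq_one, mul_one]
    intro i hi
    simp [Finset.mem_singleton.1 (Finsupp.support_single_subset hi)]
  · intro α hα hne
    have hdeg : α.degree = t := by_contra fun h => mem_support_iff.1 hα (hf.coeff_eq_zero h)
    obtain ⟨i, hi⟩ : ∃ i, α.erase k i ≠ 0 := by
      by_contra! h
      exact hne (hdeg ▸ erase_eq_zero_iff_eq_single_degree.1 (Finsupp.ext h))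
    have hik : i ≠ k := by rintro rfl; simp at hi
    rw [Finsupp.erase_ne hik] at hi
    rw [Finset.prod_eq_zero (Finsupp.mem_support_iff.2 hi), mul_zero]
    simp [hik, hi]
  · intro h
    rw [notMem_support_iff.1 h, zero_mul]

end PointOrder

variable {K : Type} [Field K] {N : ℕ} {ι : Type*}

section CoordChange

variable [Fintype ι] [DecidableEq ι]

/-- The expression of forms on `Kᴺ` in the coordinates of a basis `b`. Its inverse sends `X k` to
the linear form dual to `b k`. -/
def coordChange (b : Basis ι K (Fin N → K)) : MvPolynomial (Fin N) K ≃ₐ[K] MvPolynomial ι K :=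
  AlgEquiv.ofAlgHom
    (bind₁ (LinearMap.id.toMvPolynomial b (Pi.basisFun K (Fin N))))
    (bind₁ (LinearMap.id.toMvPolynomial (Pi.basisFun K (Fin N)) b))
    (algHom_ext fun k => by simp [← LinearMap.toMvPolynomial_comp])
    (algHom_ext fun j => by simp [← LinearMap.toMvPolynomial_comp])

variable (b : Basis ι K (Fin N → K))

theorem isHomogeneous_coordChange {f : MvPolynomial (Fin N) K} {t : ℕ} (hf : f.IsHomogeneous t) :
    (coordChange b f).IsHomogeneous t := by
  rw [← one_mul t]
  exact hf.aeval _ (LinearMap.id.toMvPolynomial_isHomogeneous b (Pi.basisFun K (Fin N)))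

theorem isHomogeneous_coordChange_symm {f : MvPolynomial ι K} {t : ℕ} (hf : f.IsHomogeneous t) :
    ((coordChange b).symm f).IsHomogeneous t := by
  rw [← one_mul t]
  exact hf.aeval _ (LinearMap.id.toMvPolynomial_isHomogeneous (Pi.basisFun K (Fin N)) b)

theorem eval_single_coordChange (k : ι) (f : MvPolynomial (Fin N) K) :
    eval (Pi.single k 1) (coordChange b f) = eval (b k) f := by
  have h := LinearMap.id.toMvPolynomial_eval_eq_apply b (Pi.basisFun K (Fin N))
    (c := Finsupp.single k 1)
  simp only [Finsupp.single_eq_pi_single] at h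
  change eval _ (bind₁ _ f) = _
  rw [eval, eval₂Hom_bind₁]
  congr 2
  ext j
  simpa using h j

theorem eval_coordChange_symm_X (k : ι) (v : Fin N → K) :
    eval v ((coordChange b).symm (X k)) = b.repr v k := by
  have hv : ⇑((Pi.basisFun K (Fin N)).repr v) = v := funext fun _ => by simp
  simpa [coordChange, hv] using
    LinearMap.id.toMvPolynomial_eval_eq_apply (Pi.basisFun K (Fin N)) b k
      ((Pi.basisFun K (Fin N)).repr v)

theorem coordChange_symm_X_mem_pointIdeal {k : ι} {v : Fin N → K} (h : b.repr v k = 0) :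
    (coordChange b).symm (X k) ∈ pointIdeal v :=
  Ideal.subset_span ⟨isHomogeneous_coordChange_symm b (isHomogeneous_X K k),
    by rw [eval_coordChange_symm_X, h]⟩

theorem pointIdeal_le_comap_coordPointIdealPow (k : ι) :
    pointIdeal (b k) ≤ (coordPointIdealPow K k 1).comap (coordChange b) := by
  rw [pointIdeal, Ideal.span_le]
  rintro f ⟨hf, hf0⟩ α hα
  have hbf := isHomogeneous_coordChange b hf
  have hdeg : α.degree = 1 := by_contra fun h => mem_support_iff.1 hα (hbf.coeff_eq_zero h)
  rw [Nat.one_le_iff_ne_zero, ne_eq, Finsupp.degree_eq_zero_iff,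
    erase_eq_zero_iff_eq_single_degree, hdeg]
  rintro rfl
  rw [mem_support_iff, coeff_single_eq_eval_single hbf, eval_single_coordChange] at hα
  exact hα hf0

theorem coordChange_symm_monomial_mem_pointIdeal_pow (k : ι) (α : ι →₀ ℕ) (c : K) :
    (coordChange b).symm (monomial α c) ∈ pointIdeal (b k) ^ (α.erase k).degree := by
  have hfactor : monomial α c = monomial (Finsupp.single k (α k)) c *
      ∏ l, (X l : MvPolynomial ι K) ^ α.erase k l := by
    rw [← Finsupp.prod_fintype _ (fun l e => X l ^ e) (fun _ => pow_zero _), Finsupp.prod,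
      prod_X_pow_eq_monomial, monomial_mul, add_comm, α.erase_add_single, mul_one]
  rw [hfactor, map_mul, map_prod, Finsupp.degree_eq_sum, ← Finset.prod_pow_eq_pow_sum]
  refine Ideal.mul_mem_left _ _ (Ideal.prod_mem_prod fun l _ => ?_)
  rw [map_pow]
  obtain rfl | hl := eq_or_ne l k
  · simp
  · refine Ideal.pow_mem_pow (coordChange_symm_X_mem_pointIdeal b ?_) _
    simp [hl.symm]

theorem mem_pointIdeal_pow_iff {k : ι} {m : ℕ} {f : MvPolynomial (Fin N) K} :
    f ∈ pointIdeal (b k) ^ m ↔ coordChange b f ∈ coordPointIdealPow K k m := by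
  refine ⟨fun hf => coordPointIdealPow_one_pow_le k m <| Ideal.le_comap_pow (coordChange b) m <|
    Ideal.pow_right_mono (pointIdeal_le_comap_coordPointIdealPow b k) m hf, fun hf => ?_⟩
  rw [← (coordChange b).symm_apply_apply f, (coordChange b f).as_sum, map_sum]
  exact Ideal.sum_mem _ fun α hα => Ideal.pow_le_pow_right (hf α hα)
    (coordChange_symm_monomial_mem_pointIdeal_pow b k α _)

end CoordChange

section Jets

/-- The exponents of the monomials of degree less than `m` in the affine coordinates at the `k`-th
coordinate point. They index the coefficients of the jet of order `m` of a form at that point. -/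
abbrev JetIndex (k : ι) (m : ℕ) : Type _ :=
  {α : ι →₀ ℕ // α k = 0 ∧ α.degree < m}

instance [Finite ι] (k : ι) (m : ℕ) : Finite (JetIndex k m) :=
  (Finsupp.finite_of_degree_lt m).subset fun _ h => h.2

/-- The exponent `α` raised to degree `t` with the variable `X k`. By truncated subtraction it is
`α` itself if `t < α.degree`. -/
def homogenize (k : ι) (t : ℕ) (α : ι →₀ ℕ) : ι →₀ ℕ :=
  α + Finsupp.single k (t - α.degree)

theorem degree_homogenize {k : ι} {t : ℕ} {α : ι →₀ ℕ} (h : α.degree ≤ t) :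
    (homogenize k t α).degree = t := by
  rw [homogenize, map_add, Finsupp.degree_single, Nat.add_sub_cancel' h]

theorem erase_homogenize {k : ι} {α : ι →₀ ℕ} (hα : α k = 0) (t : ℕ) :
    (homogenize k t α).erase k = α := by
  rw [homogenize, Finsupp.erase_add, Finsupp.erase_single, add_zero,
    Finsupp.erase_of_notMem_support (by simpa using hα)]

theorem homogenize_degree_erase (k : ι) (α : ι →₀ ℕ) :
    homogenize k α.degree (α.erase k) = α := by
  rw [homogenize, ← degree_erase_add_apply k α, Nat.add_sub_cancel_left, α.erase_add_single]

theorem card_jetIndex [Fintype ι] {n : ℕ} (hn : 0 < n) (hι : Fintype.card ι = n + 1) (k : ι)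
    (m : ℕ) : Nat.card (JetIndex k m) = (m + n - 1).choose n := by
  classical
  obtain _ | m := m
  · have : IsEmpty (JetIndex k 0) := ⟨fun α => Nat.not_lt_zero _ α.2.2⟩
    rw [Nat.card_of_isEmpty, Nat.choose_eq_zero_of_lt (by lia)]
  · have hmem (β : ι →₀ ℕ) : β ∈ Finset.univ.finsuppAntidiag m ↔ β.degree = m := by
      simp [Finset.mem_finsuppAntidiag, Finsupp.degree_eq_sum]
    let e : Finset.univ.finsuppAntidiag m ≃ JetIndex k (m + 1) :=
      { toFun β := ⟨β.1.erase k, by simp, by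
          have := degree_erase_add_apply k β.1
          have := (hmem _).1 β.2
          lia⟩
        invFun α := ⟨homogenize k m α.1, (hmem _).2 (degree_homogenize (Nat.le_of_lt_succ α.2.2))⟩
        left_inv β := Subtype.ext <| by
          simpa only [(hmem _).1 β.2] using homogenize_degree_erase k β.1
        right_inv α := Subtype.ext (erase_homogenize α.2.1 m) }
    rw [← Nat.card_congr e, Nat.card_eq_fintype_card, Fintype.card_coe,
      Finset.card_finsuppAntidiag_nat_eq_choose, Finset.card_univ, hι,
      show n + 1 + m - 1 = m + n by lia, show m + 1 + n - 1 = m + n by lia, Nat.choose_symm_add]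

variable [Fintype ι] [DecidableEq ι] {s : ℕ}

/-- The jets of forms of degree `t` on `Kᴺ` at the points `b i (κ i)`, to order `m i`: their
coefficients in the coordinates of `b i` at the homogenized jet exponents. -/
def jets (b : Fin s → Basis ι K (Fin N → K)) (κ : Fin s → ι) (m : Fin s → ℕ) (t : ℕ) :
    homogeneousSubmodule (Fin N) K t →ₗ[K] (Σ i, JetIndex (κ i) (m i)) → K :=
  LinearMap.pi fun x => lcoeff K (homogenize (κ x.1) t x.2) ∘ₗ
    (coordChange (b x.1)).toLinearMap ∘ₗ (homogeneousSubmodule (Fin N) K t).subtype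

variable (b : Fin s → Basis ι K (Fin N → K)) (κ : Fin s → ι) (m : Fin s → ℕ) (t : ℕ)

theorem jets_apply (f : homogeneousSubmodule (Fin N) K t) (i : Fin s)
    (α : JetIndex (κ i) (m i)) :
    jets b κ m t f ⟨i, α⟩ = coeff (homogenize (κ i) t α) (coordChange (b i) f.1) :=
  rfl

theorem mem_pointIdeal_pow_iff_jets_eq_zero (f : homogeneousSubmodule (Fin N) K t) (i : Fin s) :
    f.1 ∈ pointIdeal (b i (κ i)) ^ m i ↔ ∀ α, jets b κ m t f ⟨i, α⟩ = 0 := by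
  rw [mem_pointIdeal_pow_iff, mem_coordPointIdealPow]
  refine ⟨fun h α => ?_, fun h β hβ => ?_⟩
  · by_contra hα
    have hle := h _ (mem_support_iff.2 hα)
    rw [erase_homogenize α.2.1] at hle
    exact hle.not_gt α.2.2
  · have hdeg : β.degree = t := by_contra fun hne =>
      mem_support_iff.1 hβ ((isHomogeneous_coordChange (b i) f.2).coeff_eq_zero hne)
    by_contra! hlt
    have hzero := h ⟨β.erase (κ i), by simp, hlt⟩
    rw [jets_apply, ← congrArg (homogenize (κ i) · _) hdeg, homogenize_degree_erase] at hzero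
    exact mem_support_iff.1 hβ hzero

theorem mem_fatIdeal_iff_jets_eq_zero (f : homogeneousSubmodule (Fin N) K t) :
    f.1 ∈ fatIdeal (fun i => b i (κ i)) m ↔ jets b κ m t f = 0 := by
  simp only [fatIdeal, Ideal.mem_iInf, mem_pointIdeal_pow_iff_jets_eq_zero b κ m t f,
    funext_iff, Sigma.forall, Pi.zero_apply]

instance (t : ℕ) : FiniteDimensional K (homogeneousSubmodule (Fin N) K t) :=
  Module.Finite.iff_fg.2 (homogeneousSubmodule_fg _ _ t)

theorem gradedDim_fatIdeal_eq_finrank_ker_jets :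
    gradedDim K (fatIdeal (fun i => b i (κ i)) m) t = finrank K (jets b κ m t).ker := by
  have hmap : homogeneousSubmodule (Fin N) K t ⊓
      (fatIdeal (fun i => b i (κ i)) m).restrictScalars K =
      (jets b κ m t).ker.map (homogeneousSubmodule (Fin N) K t).subtype := by
    ext f
    constructor
    · rintro ⟨hf, hfat⟩
      exact ⟨⟨f, hf⟩, (mem_fatIdeal_iff_jets_eq_zero b κ m t _).1 hfat, rfl⟩
    · rintro ⟨f, hker, rfl⟩
      exact ⟨f.2, (mem_fatIdeal_iff_jets_eq_zero b κ m t f).2 hker⟩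
  rw [gradedDim, hmap, Submodule.finrank_map_subtype_eq]

theorem hilbFn_fatIdeal_eq_finrank_range_jets :
    hilbFn K (fatIdeal (fun i => b i (κ i)) m) t = finrank K (jets b κ m t).range := by
  rw [hilbFn, gradedDim_fatIdeal_eq_finrank_ker_jets,
    ← (jets b κ m t).finrank_range_add_finrank_ker, Nat.add_sub_cancel]

end Jets

section Criterion

theorem fatMult_eq_finrank_jets {n s : ℕ} (hn : 0 < n) (κ : Fin s → Fin (n + 1))
    (m : Fin s → ℕ) : fatMult n m = finrank K ((Σ i, JetIndex (κ i) (m i)) → K) := by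
  have (i : Fin s) : Fintype (JetIndex (κ i) (m i)) := Fintype.ofFinite _
  rw [Module.finrank_fintype_fun_eq_card, Fintype.card_sigma, fatMult]
  refine Finset.sum_congr rfl fun i _ => ?_
  rw [← Nat.card_eq_fintype_card, card_jetIndex hn (Fintype.card_fin _)]

variable {n s : ℕ} (b : Fin s → Basis (Fin (n + 1)) K (Fin (n + 1) → K))
  (κ : Fin s → Fin (n + 1)) (m : Fin s → ℕ) (t : ℕ)

theorem hilbFn_fatIdeal_eq_fatMult_iff (hn : 0 < n) :
    hilbFn K (fatIdeal (fun i => b i (κ i)) m) t = fatMult n m ↔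
      Function.Surjective (jets b κ m t) := by
  rw [hilbFn_fatIdeal_eq_finrank_range_jets, fatMult_eq_finrank_jets (K := K) hn κ m,
    ← LinearMap.range_eq_top]
  exact ⟨Submodule.eq_top_of_finrank_eq, fun h => by rw [h, finrank_top]⟩

theorem add_sub_one_le_of_surjective_jets {i j : Fin s} {k : Fin (n + 1)} (hij : i ≠ j)
    (hk : k ≠ κ i) (hbk : b i k = b j (κ j)) (hi : 0 < m i)
    (hsurj : Function.Surjective (jets b κ m t)) : m i + m j - 1 ≤ t := by
  let α : JetIndex (κ i) (m i) :=
    ⟨Finsupp.single k (m i - 1), by simp [hk.symm], by rw [Finsupp.degree_single]; lia⟩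
  obtain ⟨f, hf⟩ := hsurj (Pi.single ⟨i, α⟩ 1)
  have hfj : f.1 ∈ pointIdeal (b i k) ^ m j := by
    rw [hbk, mem_pointIdeal_pow_iff_jets_eq_zero b κ m t]
    intro β
    rw [hf, Pi.single_eq_of_ne fun h => hij (congrArg Sigma.fst h).symm]
  have hcoeff : coeff (homogenize (κ i) t α.1) (coordChange (b i) f.1) ≠ 0 := by
    rw [← jets_apply, hf, Pi.single_eq_same]
    exact one_ne_zero
  have hdeg : (homogenize (κ i) t α.1).degree = t := by_contra fun h =>
    hcoeff ((isHomogeneous_coordChange (b i) f.2).coeff_eq_zero h)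
  have hle := (mem_pointIdeal_pow_iff (b i)).1 hfj _ (mem_support_iff.2 hcoeff)
  simp only [α, homogenize, Finsupp.erase_add, Finsupp.erase_single, Finsupp.erase_single_ne hk,
    zero_add, map_add, Finsupp.degree_single] at hle hdeg
  lia

theorem le_of_coeff_homogenize_monomial_mul_ne_zero {k : ι} {t : ℕ} {α β : ι →₀ ℕ}
    {f : MvPolynomial ι K} (hα : α k = 0) (hβ : β k = 0)
    (h : coeff (homogenize k t β) (monomial α 1 * f) ≠ 0) : α ≤ β := by
  classical
  rw [coeff_monomial_mul'] at h
  have hle : α ≤ homogenize k t β := by_contra fun hnot => h (if_neg hnot)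
  intro l
  obtain rfl | hl := eq_or_ne l k
  · rw [hα, hβ]
  · simpa [homogenize, hl] using hle l

-- The form dual to `α` times `H` has no jets away from the `i`-th point, and there its jet is
-- `α` plus terms of higher degree.
theorem surjective_jets
    (h : ∀ i (α : JetIndex (κ i) (m i)), α.1.degree ≤ t ∧
      ∃ H : MvPolynomial (Fin (n + 1)) K, H.IsHomogeneous (t - α.1.degree) ∧
        eval (b i (κ i)) H ≠ 0 ∧
        ∀ j ≠ i, (coordChange (b i)).symm (monomial α.1 1) * H ∈ pointIdeal (b j (κ j)) ^ m j) :
    Function.Surjective (jets b κ m t) := by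
  rw [← LinearMap.range_eq_top]
  refine eq_top_of_triangular (fun x => x.2.1.degree) fun ⟨i, α⟩ => ?_
  obtain ⟨hαt, H, hH, hHi, hHj⟩ := h i α
  have hF : ((coordChange (b i)).symm (monomial α.1 1) * H).IsHomogeneous t := by
    simpa only [Nat.add_sub_cancel' hαt] using
      (isHomogeneous_coordChange_symm (b i) (isHomogeneous_monomial (d := α.1) (1 : K) rfl)).mul hH
  have hjets (β : JetIndex (κ i) (m i)) : jets b κ m t ⟨_, hF⟩ ⟨i, β⟩ =
      coeff (homogenize (κ i) t β) (monomial α.1 1 * coordChange (b i) H) := by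
    rw [jets_apply, map_mul, AlgEquiv.apply_symm_apply]
  refine ⟨_, ⟨⟨_, hF⟩, rfl⟩, ?_, fun ⟨j, β⟩ hne hβ => ?_⟩
  · rwa [hjets, homogenize, coeff_monomial_mul, one_mul,
      coeff_single_eq_eval_single (isHomogeneous_coordChange (b i) hH), eval_single_coordChange]
  · obtain rfl : j = i := by
      by_contra hji
      exact hβ ((mem_pointIdeal_pow_iff_jets_eq_zero b κ m t ⟨_, hF⟩ j).1 (hHj j hji) β)
    rw [hjets] at hβ
    refine degree_strictMono (lt_of_le_of_ne
      (le_of_coeff_homogenize_monomial_mul_ne_zero α.2.1 β.2.1 hβ) fun hαβ => hne ?_)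
    exact Sigma.ext rfl (heq_of_eq (Subtype.ext hαβ.symm))

theorem regFat_eq_of_surjective_jets {b : Fin s → Basis (Fin (n + 1)) K (Fin (n + 1) → K)}
    {κ : Fin s → Fin (n + 1)} {m : Fin s → ℕ} {p : Fin s → Fin (n + 1) → K} (hn : 0 < n)
    (hp : ∀ i, b i (κ i) = p i) {i j : Fin s} {k : Fin (n + 1)} (hij : i ≠ j) (hk : k ≠ κ i)
    (hbk : b i k = p j) (hi : 0 < m i)
    (hsurj : Function.Surjective (jets b κ m (m i + m j - 1))) :
    regFat K p m = m i + m j - 1 := by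
  obtain rfl : (fun i => b i (κ i)) = p := funext hp
  have hmem := (hilbFn_fatIdeal_eq_fatMult_iff b κ m _ hn).2 hsurj
  refine le_antisymm (Nat.sInf_le hmem) (le_csInf ⟨_, hmem⟩ fun t ht => ?_)
  exact add_sub_one_le_of_surjective_jets b κ m t hij hk hbk hi
    ((hilbFn_fatIdeal_eq_fatMult_iff b κ m t hn).1 ht)

end Criterion

section Multiplicities

/-- The multiplicities `m₁` and `m₂` of the paper, at indices `i₀` and `i₁`: the two largest values
of `m`, without fixing an order on the other indices. -/
structure IsLargestPair {σ : Type*} (m : σ → ℕ) (i₀ i₁ : σ) : Prop where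
  ne : i₀ ≠ i₁
  le_fst : ∀ i, m i ≤ m i₀
  le_snd : ∀ i, i ≠ i₀ → m i ≤ m i₁

variable {σ : Type*} {m : σ → ℕ} {i₀ i₁ : σ}

theorem isLargestPair_of_antitone {s : ℕ} (hs : 2 ≤ s) {m : Fin s → ℕ} (hm : Antitone m) :
    IsLargestPair m ⟨0, Nat.zero_lt_of_lt hs⟩ ⟨1, hs⟩ where
  ne := by simp
  le_fst i := hm (Fin.mk_le_of_le_val (Nat.zero_le _))
  le_snd i hi := hm (Fin.mk_le_of_le_val (Nat.one_le_iff_ne_zero.2 fun h => hi (Fin.ext h)))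

theorem IsLargestPair.add_le (h : IsLargestPair m i₀ i₁) {i j : σ} (hij : i ≠ j) :
    m i + m j ≤ m i₀ + m i₁ := by
  obtain rfl | hi := eq_or_ne i i₀
  · exact Nat.add_le_add_left (h.le_snd j hij.symm) _
  · rw [add_comm]
    exact add_le_add (h.le_fst j) (h.le_snd i hi)

theorem exists_le_sum_eq [Fintype σ] {f : σ → ℕ} {u : ℕ} (h : u ≤ ∑ r, f r) :
    ∃ g ≤ f, ∑ r, g r = u := by
  obtain ⟨g, hg, hgu⟩ := Finsupp.exists_le_degree_eq (Finsupp.equivFunOnFinite.symm f) u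
    (by simpa [Finsupp.degree_eq_sum] using h)
  exact ⟨g, hg, by rw [← hgu, Finsupp.degree_eq_sum]⟩

-- If `m r ≤ ∑ c - c r` for some `r`, the term at `r` is `u`. Otherwise each of the at least three
-- indices `r ≠ i, q` contributes at least `M - 1 - c r`, and
-- `3 * (M - 1) - ∑ c ≥ 2 * (M - 1) ≥ M ≥ m q`.
theorem le_sum_exponent_bounds [Fintype σ] [DecidableEq σ] (hcard : 5 ≤ Fintype.card σ)
    {i q : σ} (hqi : q ≠ i) {c : σ → ℕ} {u M B : ℕ} (hu : u + ∑ r, c r + 1 = M + B)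
    (hc : ∑ r, c r < M) (hM : 2 ≤ M) (hqu : m q ≤ u) (hqM : m q ≤ M)
    (hB : ∀ r, r ≠ i → r ≠ q → m r ≤ B) :
    u ≤ (u - m q) + ∑ r ∈ {i, q}ᶜ, (u - (m r - (∑ l, c l - c r))) := by
  set a := ∑ r, c r
  have hcard' : 3 ≤ ({i, q}ᶜ : Finset σ).card := by
    rw [Finset.card_compl, Finset.card_pair hqi.symm]
    lia
  by_cases hex : ∃ r ∈ ({i, q}ᶜ : Finset σ), m r ≤ a - c r
  · obtain ⟨r, hr, hmr⟩ := hex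
    have hle := Finset.single_le_sum (f := fun r => u - (m r - (a - c r)))
      (fun _ _ => Nat.zero_le _) hr
    simp only [Nat.sub_eq_zero_of_le hmr] at hle
    lia
  · push Not at hex
    have hterm : ∀ r ∈ ({i, q}ᶜ : Finset σ), M - 1 ≤ (u - (m r - (a - c r))) + c r := by
      intro r hr
      have hrB : m r ≤ B := by
        simp only [Finset.mem_compl, Finset.mem_insert, Finset.mem_singleton, not_or] at hr
        exact hB r hr.1 hr.2
      have hmr := hex r hr
      lia
    have hsum := Finset.card_nsmul_le_sum _ _ _ hterm
    rw [Finset.sum_add_distrib, smul_eq_mul] at hsum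
    have hcsum : ∑ r ∈ {i, q}ᶜ, c r ≤ a := Finset.sum_le_sum_of_subset (Finset.subset_univ _)
    have hthree : 3 * (M - 1) ≤ ({i, q}ᶜ : Finset σ).card * (M - 1) :=
      Nat.mul_le_mul_right _ hcard'
    lia

theorem IsLargestPair.exists_exponents [Fintype σ] (h : IsLargestPair m i₀ i₁)
    (hcard : 5 ≤ Fintype.card σ) (hm : 2 ≤ m i₀) {i q : σ} (hqi : q ≠ i)
    (hiq : i = i₀ ∨ q = i₀) {c : σ → ℕ} {u : ℕ} (hc : ∑ r, c r < m i)
    (hu : u + ∑ r, c r + 1 = m i₀ + m i₁) :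
    ∃ g : σ → ℕ, g i = 0 ∧ ∑ r, g r = u ∧ m q ≤ u - g q ∧
      ∀ r, r ≠ i → r ≠ q → m r ≤ (∑ l, c l - c r) + (u - g r) := by
  classical
  have hpair := h.add_le hqi
  have hB (r : σ) (hri : r ≠ i) (hrq : r ≠ q) : m r ≤ m i₁ :=
    h.le_snd r (by rcases hiq with rfl | rfl <;> assumption)
  let f (r : σ) : ℕ :=
    if r = i then 0 else if r = q then u - m q else u - (m r - (∑ l, c l - c r))
  have hfi : f i = 0 := if_pos rfl
  have hfq : f q = u - m q := by simp [f, hqi]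
  have hfr (r : σ) (hri : r ≠ i) (hrq : r ≠ q) : f r = u - (m r - (∑ l, c l - c r)) := by
    simp [f, hri, hrq]
  have hsum : u ≤ ∑ r, f r := by
    rw [← Finset.sum_add_sum_compl {i, q} f, Finset.sum_pair hqi.symm, hfi, hfq, zero_add]
    convert le_sum_exponent_bounds hcard hqi hu (hc.trans_le (h.le_fst i)) hm (by lia)
      (h.le_fst q) hB using 3 with r hr
    simp only [Finset.mem_compl, Finset.mem_insert, Finset.mem_singleton, not_or] at hr
    exact hfr r hr.1 hr.2
  obtain ⟨g, hgf, hgu⟩ := exists_le_sum_eq hsum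
  refine ⟨g, Nat.le_zero.1 (hfi ▸ hgf i), hgu, ?_, fun r hri hrq => ?_⟩
  · have := hfq ▸ hgf q
    lia
  · have hgr := hfr r hri hrq ▸ hgf r
    have := hB r hri hrq
    have := h.le_fst i
    lia

-- The exponent count at `P_i` needs `i = i₀ ∨ q = i₀`, and the lower bound needs `P_{i₁}` among
-- the basis vectors used at `P_{i₀}`; these are all points but `P_q`.
theorem IsLargestPair.exists_ne_ne [Fintype σ] (h : IsLargestPair m i₀ i₁)
    (hcard : 2 < Fintype.card σ) (i : σ) : ∃ q, q ≠ i ∧ q ≠ i₁ ∧ (i = i₀ ∨ q = i₀) := by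
  classical
  obtain rfl | hi := eq_or_ne i i₀
  · obtain ⟨q, -, hq⟩ := Finset.exists_mem_notMem_of_card_lt_card
      (s := {i, i₁}) (t := Finset.univ) (by rwa [Finset.card_pair h.ne])
    simp only [Finset.mem_insert, Finset.mem_singleton, not_or] at hq
    exact ⟨q, hq.1, hq.2, .inl rfl⟩
  · exact ⟨i₀, hi.symm, h.ne, .inr rfl⟩

end Multiplicities

section LinearlyGeneral

variable {n s : ℕ}

/-- The points `p i` of `ℙⁿ` are in linearly general position: no `j + 2` of them lie on a
`j`-dimensional linear subspace, for `j < n`. -/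
def LinearlyGeneral (p : Fin s → Fin (n + 1) → K) : Prop :=
  ∀ j < n, ∀ T : Finset (Fin s), T.card = j + 2 → ¬ OnLinearSubspace p T j

theorem LinearlyGeneral.linearIndependent_comp {p : Fin s → Fin (n + 1) → K}
    (hp : LinearlyGeneral p) {r : ℕ} (hr : 2 ≤ r) (hrn : r ≤ n + 1) (e : Fin r ↪ Fin s) :
    LinearIndependent K (p ∘ e) := by
  by_contra hdep
  rw [linearIndependent_iff_card_le_finrank_span, Fintype.card_fin, not_le] at hdep
  refine hp (r - 2) (by lia) (Finset.univ.map e) (by simp [Nat.sub_add_cancel hr])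
    ⟨Submodule.span K (Set.range (p ∘ e)), ?_, ?_⟩
  · change Set.finrank K _ ≤ _
    lia
  · simp only [Finset.mem_map, Finset.mem_univ, true_and, forall_exists_index]
    rintro _ k rfl
    exact Submodule.subset_span ⟨k, rfl⟩

theorem regFat_eq_of_linearIndependent {p : Fin s → Fin (n + 1) → K} {m : Fin s → ℕ}
    {i₀ i₁ : Fin s} (hn : 0 < n) (hp : LinearIndependent K p) (h : IsLargestPair m i₀ i₁)
    (hm : 0 < m i₀) : regFat K p m = m i₀ + m i₁ - 1 := by
  obtain ⟨b, e, hb⟩ := exists_basis_extending hp (Pi.basisFun K (Fin (n + 1)))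
  refine regFat_eq_of_surjective_jets (b := fun _ => b) (κ := e) hn hb h.ne
    (e.injective.ne h.ne.symm) (hb i₁) hm (surjective_jets _ _ _ _ fun i α => ?_)
  have hα := α.2.2
  have hi := h.le_fst i
  refine ⟨by lia, (coordChange b).symm (X (e i)) ^ (m i₀ + m i₁ - 1 - α.1.degree), ?_, ?_,
    fun j hji => Ideal.mul_mem_left _ _ ?_⟩
  · simpa using (isHomogeneous_coordChange_symm b (isHomogeneous_X K (e i))).pow _
  · simp [eval_coordChange_symm_X]
  · have hij := h.add_le hji
    refine Ideal.pow_le_pow_right ?_ (Ideal.pow_mem_pow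
      (coordChange_symm_X_mem_pointIdeal b ?_) _)
    · lia
    · simp [e.injective.ne hji]

theorem exists_separatingForm {σ : Type*} [Fintype σ] {p : σ → Fin N → K} {i : σ}
    (h : ∀ l ≠ i, ∃ f : MvPolynomial (Fin N) K, f.IsHomogeneous 1 ∧ eval (p i) f ≠ 0 ∧
      ∀ r, r ≠ i → r ≠ l → f ∈ pointIdeal (p r))
    {g : σ → ℕ} (hg : g i = 0) :
    ∃ H : MvPolynomial (Fin N) K, H.IsHomogeneous (∑ l, g l) ∧ eval (p i) H ≠ 0 ∧
      ∀ r ≠ i, H ∈ pointIdeal (p r) ^ (∑ l, g l - g r) := by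
  classical
  choose! f hf hfi hfr using h
  refine ⟨∏ l, f l ^ g l, IsHomogeneous.prod _ _ _ fun l _ => ?_, ?_, fun r hr => ?_⟩
  · obtain rfl | hl := eq_or_ne l i
    · simpa [hg] using isHomogeneous_one _ _
    · simpa using (hf l hl).pow (g l)
  · rw [map_prod, Finset.prod_ne_zero_iff]
    intro l _
    obtain rfl | hl := eq_or_ne l i
    · simp [hg]
    · simpa using pow_ne_zero _ (hfi l hl)
  · rw [← Finset.mul_prod_erase _ _ (Finset.mem_univ r),
      ← Finset.add_sum_erase _ g (Finset.mem_univ r), Nat.add_sub_cancel_left,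
      ← Finset.prod_pow_eq_pow_sum]
    refine Ideal.mul_mem_left _ _ (Ideal.prod_mem_prod fun l hl => ?_)
    obtain rfl | hli := eq_or_ne l i
    · simp [hg]
    · exact Ideal.pow_mem_pow (hfr l hli r hr (Finset.ne_of_mem_erase hl).symm) _

variable {p : Fin (n + 2) → Fin (n + 1) → K}

theorem LinearlyGeneral.exists_basis_succAbove (hp : LinearlyGeneral p) (hn : 0 < n)
    (l : Fin (n + 2)) :
    ∃ b : Basis (Fin (n + 1)) K (Fin (n + 1) → K), ∀ k, b k = p (l.succAbove k) :=
  have hli := hp.linearIndependent_comp (by lia) le_rfl l.succAboveEmb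
  ⟨basisOfLinearIndependentOfCardEqFinrank hli (by simp), fun k => by simp⟩

theorem LinearlyGeneral.exists_linearForm (hp : LinearlyGeneral p) (hn : 0 < n)
    {i l : Fin (n + 2)} (hil : i ≠ l) :
    ∃ f : MvPolynomial (Fin (n + 1)) K, f.IsHomogeneous 1 ∧ eval (p i) f ≠ 0 ∧
      ∀ r, r ≠ i → r ≠ l → f ∈ pointIdeal (p r) := by
  obtain ⟨b, hb⟩ := hp.exists_basis_succAbove hn l
  obtain ⟨k, rfl⟩ := Fin.exists_succAbove_eq hil
  refine ⟨_, isHomogeneous_coordChange_symm b (isHomogeneous_X K k), ?_, fun r hr hrl => ?_⟩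
  · simp [eval_coordChange_symm_X, ← hb]
  · obtain ⟨k', rfl⟩ := Fin.exists_succAbove_eq hrl
    refine coordChange_symm_X_mem_pointIdeal b ?_
    rw [← hb, b.repr_self, Finsupp.single_eq_of_ne fun h => hr (congrArg _ h.symm)]

theorem LinearlyGeneral.exists_form_mul_monomial_mem (hp : LinearlyGeneral p) (hn : 3 ≤ n)
    {m : Fin (n + 2) → ℕ} {i₀ i₁ : Fin (n + 2)} (h : IsLargestPair m i₀ i₁) (hm : 2 ≤ m i₀)
    {q : Fin (n + 2)} {k : Fin (n + 1)} (hq : q.succAbove k = i₀ ∨ q = i₀)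
    {b : Basis (Fin (n + 1)) K (Fin (n + 1) → K)} (hb : ∀ k, b k = p (q.succAbove k))
    (α : JetIndex k (m (q.succAbove k))) :
    ∃ H : MvPolynomial (Fin (n + 1)) K, H.IsHomogeneous (m i₀ + m i₁ - 1 - α.1.degree) ∧
      eval (p (q.succAbove k)) H ≠ 0 ∧ ∀ r ≠ q.succAbove k,
        (coordChange b).symm (monomial α.1 1) * H ∈ pointIdeal (p r) ^ m r := by
  let c : Fin (n + 2) → ℕ := q.insertNth 0 α.1
  have hc : ∑ r, c r = α.1.degree := by
    simp [c, Fin.sum_univ_succAbove _ q, Finsupp.degree_eq_sum]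
  have hα := α.2.2
  have hle := h.le_fst (q.succAbove k)
  obtain ⟨g, hgi, hgu, hgq, hgr⟩ := h.exists_exponents (by simpa using hn) hm
    (Fin.ne_succAbove q k) hq (hc.trans_lt hα)
    (show m i₀ + m i₁ - 1 - α.1.degree + ∑ r, c r + 1 = m i₀ + m i₁ by lia)
  obtain ⟨H, hH, hHi, hHr⟩ :=
    exists_separatingForm (fun l hl => hp.exists_linearForm (by lia) hl.symm) hgi
  rw [hgu] at hH hHr
  refine ⟨H, hH, hHi, fun r hri => ?_⟩
  obtain rfl | hrq := eq_or_ne r q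
  · exact Ideal.mul_mem_left _ _ (Ideal.pow_le_pow_right hgq (hHr r hri))
  · have hmr := hgr r hri hrq
    obtain ⟨k', rfl⟩ := Fin.exists_succAbove_eq hrq
    have hck : ∑ l, c l - c (q.succAbove k') = (α.1.erase k').degree := by
      have hcα : c (q.succAbove k') = α.1 k' := Fin.insertNth_apply_succAbove ..
      rw [hc, hcα, ← degree_erase_add_apply k', Nat.add_sub_cancel]
    refine Ideal.pow_le_pow_right (hck ▸ hmr) ?_
    rw [pow_add, ← hb]
    exact Ideal.mul_mem_mul (coordChange_symm_monomial_mem_pointIdeal_pow b k' α.1 1)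
      (hb k' ▸ hHr _ hri)

theorem LinearlyGeneral.regFat_eq (hp : LinearlyGeneral p) (hn : 3 ≤ n) {m : Fin (n + 2) → ℕ}
    {i₀ i₁ : Fin (n + 2)} (h : IsLargestPair m i₀ i₁) (hm : 2 ≤ m i₀) :
    regFat K p m = m i₀ + m i₁ - 1 := by
  choose q hqi hqi₁ hq using h.exists_ne_ne (by rw [Fintype.card_fin]; lia)
  choose κ hκ using fun i => Fin.exists_succAbove_eq (hqi i).symm
  choose b hb using fun i => hp.exists_basis_succAbove (by lia) (q i)
  have hbκ (i : Fin (n + 2)) : b i (κ i) = p i := by rw [hb, hκ]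
  obtain ⟨k₁, hk₁⟩ := Fin.exists_succAbove_eq (hqi₁ i₀).symm
  have hk₁κ : k₁ ≠ κ i₀ := by
    rintro rfl
    exact h.ne ((hκ i₀).symm.trans hk₁)
  refine regFat_eq_of_surjective_jets (by lia) hbκ h.ne hk₁κ (by rw [hb, hk₁]) (by lia)
    (surjective_jets _ _ _ _ fun i α => ⟨?_, ?_⟩)
  · have := α.2.2
    have := h.le_fst i
    lia
  · simp only [hbκ]
    have hform := hp.exists_form_mul_monomial_mem hn h hm ((hκ i).symm ▸ hq i) (hb i)
      (k := κ i)
    rw [hκ i] at hform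
    exact hform α

end LinearlyGeneral

end FatPoints

open FatPoints in
theorem stmt17_general {K : Type} [Field K] {n s : ℕ}
    (hn : 3 ≤ n) (hs2 : 2 ≤ s) (hs : s ≤ n + 2)
    (p : Fin s → Fin (n + 1) → K)
    (hgen : ∀ j : ℕ, j < n → ∀ T : Finset (Fin s), T.card = j + 2 →
      ¬ OnLinearSubspace p T j)
    (m : Fin s → ℕ) (hmono : ∀ i j : Fin s, i ≤ j → m j ≤ m i)
    (hm1 : 2 ≤ m ⟨0, Nat.zero_lt_of_lt hs2⟩) :
    regFat K p m = m ⟨0, Nat.zero_lt_of_lt hs2⟩ + m ⟨1, hs2⟩ - 1 := by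
  have hpair := isLargestPair_of_antitone hs2 hmono
  obtain hs | rfl := hs.lt_or_eq
  · have hp := LinearlyGeneral.linearIndependent_comp hgen hs2 (Nat.le_of_lt_succ hs) (.refl _)
    exact regFat_eq_of_linearIndependent (by lia) hp hpair (by lia)
  · exact LinearlyGeneral.regFat_eq hgen hn hpair hm1

/-- Lemma 2.4 (CTV): for `2 ≤ s ≤ n+2` points in linearly general position in `ℙⁿ`,
`n ≥ 3`, `reg(R/I) = m₁ + m₂ - 1`. -/
theorem stmt17 {K : Type} [Field K] [IsAlgClosed K] {n s : ℕ}
    (hn : 3 ≤ n) (hs2 : 2 ≤ s) (hs : s ≤ n + 2)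
    (p : Fin s → Fin (n + 1) → K) (hdist : ProjDistinct p)
    (hgen : ∀ j : ℕ, j < n → ∀ T : Finset (Fin s), T.card = j + 2 →
      ¬ OnLinearSubspace p T j)
    (m : Fin s → ℕ) (hmono : ∀ i j : Fin s, i ≤ j → m j ≤ m i)
    (hpos : ∀ i, 0 < m i) (hm1 : 2 ≤ m ⟨0, by omega⟩) :
    regFat K p m = m ⟨0, by omega⟩ + m ⟨1, by omega⟩ - 1 :=
  stmt17_general hn hs2 hs p hgen m hmono hm1
end
end
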